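/- arXiv:1310.3193 — 6 statements merged into one kernel-verified Lean document; each statement's English description precedes it below -/
import Mathlib

section
/- For every integer n ≥ 1 and every s ∈ (0,1), ∫_{{x ∈ ℝⁿ : |x| > 1}} dx/(|x|^n·(|x|²−1)^s) = π^{1+n/2}/(Γ(n/2)·sin(πs)). Consequently, with c(n,s) = Γ(n/2)·sin(πs)/π^{1+n/2}, one has ∫_{ℝⁿ} η_r^{(s)}(y) dy = 1 for every r > 0. -/
open MeasureTheory Real Set

/-- The normalizing constant `c(n,s) = Γ(n/2)·sin(πs)/π^{1+n/2}`. -/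
noncomputable def cns (n : ℕ) (s : ℝ) : ℝ :=
  Real.Gamma ((n : ℝ) / 2) * Real.sin (Real.pi * s) / Real.pi ^ ((1 : ℝ) + (n : ℝ) / 2)

/-- The kernel `η_r^{(s)}(y) = c(n,s)·r^{2s}/(|y|^n·(|y|²−r²)^s)` for `|y| > r`, `0` otherwise. -/
noncomputable def eta (n : ℕ) (s r : ℝ) (y : EuclideanSpace ℝ (Fin n)) : ℝ :=
  if r < ‖y‖ then cns n s * r ^ (2 * s) / (‖y‖ ^ n * (‖y‖ ^ 2 - r ^ 2) ^ s) else 0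

/-!
In polar coordinates the Jacobian cancels the factor `|x|ⁿ` up to `1/t`, so the integral over
`|x| > 1` is the area of the unit sphere times `∫₁^∞ t⁻¹ (t² - 1)⁻ˢ dt`. The substitution
`u = t⁻²` turns the latter into half the Beta integral `B(s, 1 - s) = π / sin (π s)`. The kernels
`η_r` are the mass-preserving dilates of `η_1`, so all have the same integral.
-/

open Module Metric ProbabilityTheory

section OneVariable

theorem integral_Ioo_rpow_mul_one_sub_rpow {a b : ℝ} (ha : 0 < a) (hb : 0 < b) :
    ∫ x in Ioo (0 : ℝ) 1, x ^ (a - 1) * (1 - x) ^ (b - 1) = beta a b := by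
  have complex_integral : Complex.betaIntegral a b =
      ((∫ x in Ioo (0 : ℝ) 1, x ^ (a - 1) * (1 - x) ^ (b - 1) : ℝ) : ℂ) := by
    rw [Complex.betaIntegral, intervalIntegral.integral_of_le zero_le_one,
      integral_Ioc_eq_integral_Ioo, ← integral_complex_ofReal]
    refine setIntegral_congr_fun measurableSet_Ioo fun x hx ↦ ?_
    simp [Complex.ofReal_cpow hx.1.le, Complex.ofReal_cpow (sub_nonneg.2 hx.2.le)]
  rw [beta_eq_betaIntegralReal a b ha hb, complex_integral, Complex.ofReal_re]

theorem beta_self_one_sub (s : ℝ) : beta s (1 - s) = π / sin (π * s) := by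
  rw [beta, add_sub_cancel, Gamma_one, div_one, Gamma_mul_Gamma_one_sub]

theorem image_rpow_Ioi_of_neg {p c : ℝ} (hp : p < 0) (hc : 0 < c) :
    (· ^ p) '' Ioi c = Ioo 0 (c ^ p) := by
  ext y
  constructor
  · rintro ⟨x, hx, rfl⟩
    exact ⟨rpow_pos_of_pos (hc.trans hx) p, rpow_lt_rpow_of_neg hc hx hp⟩
  · rintro ⟨hy, hyc⟩
    refine ⟨y ^ p⁻¹, ?_, rpow_inv_rpow hy.le hp.ne⟩
    simpa [rpow_rpow_inv hc.le hp.ne] using rpow_lt_rpow_of_neg hy hyc (inv_lt_zero.2 hp)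

theorem integral_comp_rpow_Ioi_of_neg {F : Type*} [NormedAddCommGroup F] [NormedSpace ℝ F]
    (g : ℝ → F) {p c : ℝ} (hp : p < 0) (hc : 0 < c) :
    ∫ x in Ioi c, (-p * x ^ (p - 1)) • g (x ^ p) = ∫ y in Ioo 0 (c ^ p), g y := by
  rw [← image_rpow_Ioi_of_neg hp hc,
    integral_image_eq_integral_abs_deriv_smul measurableSet_Ioi
      (fun x hx ↦ (hasDerivAt_rpow_const (Or.inl (hc.trans hx).ne')).hasDerivWithinAt)
      ((rpow_left_injOn hp.ne).mono fun x hx ↦ (hc.trans hx).le)]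
  refine setIntegral_congr_fun measurableSet_Ioi fun x hx ↦ ?_
  have hx₀ : 0 < x := hc.trans hx
  simp only [abs_mul, abs_of_neg hp, abs_of_pos (rpow_pos_of_pos hx₀ _)]

theorem integral_Ioi_rpow_mul_rpow_sub_one_rpow {a b q : ℝ} (ha : 0 < a) (hb : 0 < b)
    (hq : 0 < q) :
    ∫ t in Ioi (1 : ℝ), t ^ (q - 1 - q * (a + b)) * (t ^ q - 1) ^ (b - 1) = beta a b / q := by
  have substitution := integral_comp_rpow_Ioi_of_neg
    (fun u ↦ u ^ (a - 1) * (1 - u) ^ (b - 1)) (neg_neg_of_pos hq) one_pos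
  rw [one_rpow, integral_Ioo_rpow_mul_one_sub_rpow ha hb] at substitution
  rw [eq_div_iff hq.ne', mul_comm, ← substitution, ← integral_const_mul]
  refine setIntegral_congr_fun measurableSet_Ioi fun t (ht : 1 < t) ↦ ?_
  have ht₀ : 0 < t := one_pos.trans ht
  have one_sub_eq : 1 - t ^ (-q) = t ^ (-q) * (t ^ q - 1) := by
    rw [mul_sub, ← rpow_add ht₀, neg_add_cancel, rpow_zero, mul_one]
  have exponent_eq :
      t ^ (q - 1 - q * (a + b)) = t ^ (-q - 1) * t ^ (-q * (a - 1)) * t ^ (-q * (b - 1)) := by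
    rw [← rpow_add ht₀, ← rpow_add ht₀]
    ring_nf
  simp only [smul_eq_mul]
  rw [one_sub_eq, mul_rpow (rpow_nonneg ht₀.le _) (sub_nonneg.2 (one_le_rpow ht.le hq.le)),
    ← rpow_mul ht₀.le, ← rpow_mul ht₀.le, exponent_eq]
  ring

theorem integral_Ioi_inv_mul_sq_sub_one_rpow_neg {s : ℝ} (hs : s ∈ Ioo (0 : ℝ) 1) :
    ∫ t in Ioi (1 : ℝ), t⁻¹ * (t ^ 2 - 1) ^ (-s) = π / (2 * sin (π * s)) := by
  have h := integral_Ioi_rpow_mul_rpow_sub_one_rpow hs.1 (sub_pos.2 hs.2) two_pos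
  have exponent_eq : (2 : ℝ) - 1 - 2 * (s + (1 - s)) = -1 := by ring
  simpa only [exponent_eq, sub_sub_cancel_left, rpow_neg_one, rpow_two, beta_self_one_sub,
    div_div, mul_comm (sin _)] using h

end OneVariable

section Radial

variable {E : Type*} [NormedAddCommGroup E] [NormedSpace ℝ E] [FiniteDimensional ℝ E]
  [Nontrivial E] [MeasurableSpace E] [BorelSpace E] (μ : Measure E) [μ.IsAddHaarMeasure]

theorem setIntegral_lt_norm_fun_norm_addHaar {F : Type*} [NormedAddCommGroup F] [NormedSpace ℝ F]
    (f : ℝ → F) {r : ℝ} (hr : 0 ≤ r) :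
    ∫ x in {x : E | r < ‖x‖}, f ‖x‖ ∂μ =
      finrank ℝ E • μ.real (ball 0 1) • ∫ t in Ioi r, t ^ (finrank ℝ E - 1) • f t := by
  have radial_indicator : {x : E | r < ‖x‖}.indicator (fun x ↦ f ‖x‖) =
      fun x ↦ (Ioi r).indicator f ‖x‖ := rfl
  rw [← integral_indicator (measurableSet_lt measurable_const measurable_norm), radial_indicator,
    integral_fun_norm_addHaar]
  simp_rw [← indicator_smul_apply (Ioi r) (fun t : ℝ ↦ t ^ (finrank ℝ E - 1)) f]
  rw [setIntegral_indicator measurableSet_Ioi, Ioi_inter_Ioi, max_eq_right hr]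

theorem setIntegral_one_lt_norm_addHaar {s : ℝ} (hs : s ∈ Ioo (0 : ℝ) 1) :
    ∫ x in {x : E | 1 < ‖x‖}, 1 / (‖x‖ ^ finrank ℝ E * (‖x‖ ^ 2 - 1) ^ s) ∂μ =
      finrank ℝ E * μ.real (ball 0 1) * (π / (2 * sin (π * s))) := by
  rw [setIntegral_lt_norm_fun_norm_addHaar μ
      (fun t ↦ 1 / (t ^ finrank ℝ E * (t ^ 2 - 1) ^ s)) zero_le_one,
    nsmul_eq_mul, smul_eq_mul, ← mul_assoc, ← integral_Ioi_inv_mul_sq_sub_one_rpow_neg hs]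
  congr 1
  refine setIntegral_congr_fun measurableSet_Ioi fun t (ht : 1 < t) ↦ ?_
  have ht₀ : t ≠ 0 := (one_pos.trans ht).ne'
  have jacobian_eq : t ^ finrank ℝ E = t ^ (finrank ℝ E - 1) * t :=
    (pow_sub_one_mul finrank_pos.ne' t).symm
  simp only [smul_eq_mul]
  rw [rpow_neg (sub_nonneg.2 (one_le_pow₀ ht.le)), jacobian_eq]
  field_simp

end Radial

section InnerProduct

variable (E : Type*) [NormedAddCommGroup E] [InnerProductSpace ℝ E] [FiniteDimensional ℝ E]
  [Nontrivial E] [MeasurableSpace E] [BorelSpace E]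

theorem finrank_mul_volume_real_ball_zero_one :
    finrank ℝ E * volume.real (ball (0 : E) 1) =
      2 * π ^ ((finrank ℝ E : ℝ) / 2) / Gamma ((finrank ℝ E : ℝ) / 2) := by
  have dim_pos : (0 : ℝ) < finrank ℝ E := Nat.cast_pos.2 finrank_pos
  have half_dim_pos : (0 : ℝ) < (finrank ℝ E : ℝ) / 2 := half_pos dim_pos
  rw [Measure.real, InnerProductSpace.volume_ball, ENNReal.ofReal_one, one_pow, one_mul,
    Gamma_add_one half_dim_pos.ne', ENNReal.toReal_ofReal (by positivity),
    rpow_div_two_eq_sqrt _ pi_pos.le, rpow_natCast]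
  field_simp

theorem setIntegral_one_lt_norm_volume {s : ℝ} (hs : s ∈ Ioo (0 : ℝ) 1) :
    ∫ x in {x : E | 1 < ‖x‖}, 1 / (‖x‖ ^ finrank ℝ E * (‖x‖ ^ 2 - 1) ^ s) =
      π ^ ((1 : ℝ) + (finrank ℝ E : ℝ) / 2) /
        (Gamma ((finrank ℝ E : ℝ) / 2) * sin (π * s)) := by
  rw [setIntegral_one_lt_norm_addHaar volume hs, finrank_mul_volume_real_ball_zero_one,
    div_mul_div_comm, mul_left_comm, mul_assoc, mul_div_mul_left _ _ two_ne_zero,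
    rpow_one_add' pi_pos.le (by positivity), mul_comm π (π ^ _)]

end InnerProduct

section Kernel

variable {n : ℕ}

theorem cns_ne_zero {s : ℝ} (hn : 1 ≤ n) (hs : s ∈ Ioo (0 : ℝ) 1) : cns n s ≠ 0 := by
  have hΓ : 0 < Gamma ((n : ℝ) / 2) := Gamma_pos_of_pos (by positivity)
  have hsin : 0 < sin (π * s) :=
    sin_pos_of_pos_of_lt_pi (mul_pos pi_pos hs.1) (mul_lt_of_lt_one_right pi_pos hs.2)
  exact div_ne_zero (mul_ne_zero hΓ.ne' hsin.ne') (rpow_pos_of_pos pi_pos _).ne'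

theorem eta_mul_smul (s : ℝ) {r ρ : ℝ} (hr : 0 < r) (hρ : 0 ≤ ρ)
    (x : EuclideanSpace ℝ (Fin n)) :
    eta n s (r * ρ) (r • x) = (r ^ n)⁻¹ * eta n s ρ x := by
  simp only [eta, norm_smul, norm_of_nonneg hr.le, mul_lt_mul_iff_right₀ hr]
  split_ifs with hx
  · have sq_sub_nonneg : 0 ≤ ‖x‖ ^ 2 - ρ ^ 2 := sub_nonneg.2 (pow_le_pow_left₀ hρ hx.le 2)
    have dilate_sub : ((r * ‖x‖) ^ 2 - (r * ρ) ^ 2) ^ s =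
        r ^ (2 * s) * (‖x‖ ^ 2 - ρ ^ 2) ^ s := by
      rw [mul_pow, mul_pow, ← mul_sub, mul_rpow (sq_nonneg r) sq_sub_nonneg, rpow_mul hr.le,
        rpow_two]
    have hrs : r ^ (2 * s) ≠ 0 := (rpow_pos_of_pos hr _).ne'
    rw [dilate_sub, mul_pow, mul_rpow hr.le hρ]
    field_simp
  · rw [mul_zero]

variable (n) (s : ℝ)

theorem integral_eta_eq_integral_eta_one {r : ℝ} (hr : 0 < r) :
    ∫ y, eta n s r y = ∫ y, eta n s 1 y := by
  have dilation := Measure.integral_comp_smul_of_nonneg volume (eta n s r) r (hR := hr.le)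
  have eta_smul (x : EuclideanSpace ℝ (Fin n)) :
      eta n s r (r • x) = (r ^ n)⁻¹ * eta n s 1 x := by
    simpa using eta_mul_smul s hr zero_le_one x
  simp_rw [eta_smul, integral_const_mul, finrank_euclideanSpace_fin, smul_eq_mul] at dilation
  exact (mul_left_cancel₀ (inv_ne_zero (pow_pos hr n).ne') dilation).symm

theorem integral_eta_one :
    ∫ y, eta n s 1 y = cns n s *
      ∫ x in {x : EuclideanSpace ℝ (Fin n) | 1 < ‖x‖}, 1 / (‖x‖ ^ n * (‖x‖ ^ 2 - 1) ^ s) := by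
  rw [← integral_const_mul,
    ← integral_indicator (measurableSet_lt measurable_const measurable_norm)]
  refine integral_congr_ae (.of_forall fun y ↦ ?_)
  simp [eta, indicator_apply, div_eq_mul_inv]

end Kernel

/-- For `n ≥ 1` and `s ∈ (0,1)`,
`∫_{|x|>1} dx/(|x|^n (|x|²−1)^s) = π^{1+n/2}/(Γ(n/2) sin(πs))`; consequently
`∫_{ℝⁿ} η_r^{(s)} = 1` for every `r > 0`. -/
theorem integral_eta_kernel (n : ℕ) (hn : 1 ≤ n) (s : ℝ) (hs : s ∈ Set.Ioo (0 : ℝ) 1) :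
    (∫ x in {x : EuclideanSpace ℝ (Fin n) | 1 < ‖x‖},
        1 / (‖x‖ ^ n * (‖x‖ ^ 2 - 1) ^ s)) =
      Real.pi ^ ((1 : ℝ) + (n : ℝ) / 2) / (Real.Gamma ((n : ℝ) / 2) * Real.sin (Real.pi * s)) ∧
    ∀ r : ℝ, 0 < r → (∫ y : EuclideanSpace ℝ (Fin n), eta n s r y) = 1 := by
  have : Nonempty (Fin n) := ⟨⟨0, hn⟩⟩
  have exterior_integral := setIntegral_one_lt_norm_volume (EuclideanSpace ℝ (Fin n)) hs
  rw [finrank_euclideanSpace_fin] at exterior_integral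
  refine ⟨exterior_integral, fun r hr ↦ ?_⟩
  rw [integral_eta_eq_integral_eta_one n s hr, integral_eta_one, exterior_integral, ← inv_div,
    ← cns, mul_inv_cancel₀ (cns_ne_zero hn hs)]
end

section
/- Let n ≥ 1, s ∈ (0,1) and 0 < σ < 1−s. Define u_σ : ℝⁿ → ℝ by u_σ(x) = c(n,s)·(1−|x|²)^{−σ} for |x| < 1, u_σ(x) = c(n,s+σ)·(|x|²−1)^{−σ} for |x| > 1, and u_σ(x) = 0 for |x| = 1. Then u_σ satisfies the s-mean value property on the open unit ball B: for every x ∈ B and every 0 < r < 1−|x|, u_σ(x) = ∫_{ℝⁿ∖B_r(x)} η_r^{(s)}(y−x)·u_σ(y) dy, with the integral absolutely convergent. -/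
open MeasureTheory Real Set

/-- The explicit family of `s`-harmonic functions on the unit ball:
`u_σ(x) = c(n,s)·(1−|x|²)^{−σ}` for `|x| < 1`, `c(n,s+σ)·(|x|²−1)^{−σ}` for `|x| > 1`,
`0` for `|x| = 1`. -/
noncomputable def uSigma (n : ℕ) (s σ : ℝ) (x : EuclideanSpace ℝ (Fin n)) : ℝ :=
  if ‖x‖ < 1 then cns n s * (1 - ‖x‖ ^ 2) ^ (-σ)
  else if 1 < ‖x‖ then cns n (s + σ) * (‖x‖ ^ 2 - 1) ^ (-σ)
  else 0

/-!
In polar coordinates around the centre `x` of the excluded ball, a mean value integral over `ℝⁿ` is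
an average, over the lines through `x`, of one-variable integrals in the signed distance `ρ` to `x`.
On a line meeting the unit sphere at `ρ = a` and `ρ = -b` one has `1 - |y|² = (a - ρ)(b + ρ)`, where
the product `a b = 1 - |x|²` does not depend on the line, so it is enough to compute the integral on
a line. The substitution `ρ ↦ 1/ρ` turns its integrand into a constant multiple of
`∏ |t - cᵢ| ^ eᵢ * sin θ(t)`, with five points `cᵢ`, exponents of sum `-1`, and `θ` piecewise
constant: up to sign this is the imaginary part of the boundary values of the Schwarz–Christoffel
integrand `∏ (z - cᵢ) ^ eᵢ` on the upper half plane. Cauchy's theorem on a large half disc compares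
its integral with that over a half circle, and the exponent sum `-1` makes the result invariant
under scaling of the `cᵢ`. Shrinking them to `0` leaves the half circle integral of `1/z`, that is,
`π`.
-/

open Filter Topology

section ComplexPowers

lemma ofReal_cpow_eq_abs_rpow_mul_exp (y e : ℝ) :
    (y : ℂ) ^ (e : ℂ) =
      (|y| ^ e : ℝ) * Complex.exp ((if y < 0 then π * e else 0 : ℝ) * Complex.I) := by
  split_ifs with hy
  · rw [Complex.ofReal_cpow_of_nonpos hy.le, abs_of_neg hy, Complex.ofReal_cpow (by linarith)]
    push_cast
    congr 2
    ring
  · have hy : 0 ≤ y := not_lt.mp hy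
    simp [abs_of_nonneg hy, Complex.ofReal_cpow hy]

variable {ι : Type*} [Fintype ι]

lemma im_prod_ofReal_cpow (y e : ι → ℝ) :
    (∏ i, (y i : ℂ) ^ (e i : ℂ)).im =
      (∏ i, |y i| ^ e i) * Real.sin (π * ∑ i with y i < 0, e i) := by
  have hangle : ∑ i, ((if y i < 0 then π * e i else 0 : ℝ) * Complex.I : ℂ) =
      ((π * ∑ i with y i < 0, e i : ℝ) : ℂ) * Complex.I := by
    rw [← Finset.sum_mul, ← Complex.ofReal_sum, Finset.mul_sum, Finset.sum_filter]
  simp only [ofReal_cpow_eq_abs_rpow_mul_exp]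
  rw [Finset.prod_mul_distrib, ← Complex.exp_sum, hangle, ← Complex.ofReal_prod,
    Complex.im_ofReal_mul, Complex.exp_ofReal_mul_I_im]

lemma continuousWithinAt_cpow_const_upperHalfPlane {z : ℂ} (hz : z ≠ 0) (a : ℂ) :
    ContinuousWithinAt (fun w : ℂ ↦ w ^ a) {w | 0 ≤ w.im} z := by
  by_cases hslit : z ∈ Complex.slitPlane
  · exact (continuousAt_cpow_const hslit).continuousWithinAt
  obtain ⟨hre, him⟩ : z.re ≤ 0 ∧ z.im = 0 := by
    simpa [Complex.mem_slitPlane_iff] using hslit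
  have hre : z.re < 0 := hre.lt_of_ne fun h ↦ hz (Complex.ext h him)
  have hlog := Complex.continuousWithinAt_log_of_re_neg_of_im_zero hre him
  have hexp : ContinuousWithinAt (fun w ↦ Complex.exp (Complex.log w * a)) {w | 0 ≤ w.im} z :=
    (hlog.mul continuousWithinAt_const).cexp
  refine hexp.congr_of_eventuallyEq ?_ (Complex.cpow_def_of_ne_zero hz a)
  filter_upwards [mem_nhdsWithin_of_mem_nhds (isOpen_ne.mem_nhds hz)] with w hw
  exact Complex.cpow_def_of_ne_zero hw a

end ComplexPowers

lemma rpow_le_rpow_abs_mul_rpow_min {K m w : ℝ} (e : ℝ) (hK : 1 ≤ K) (hm : 0 < m) (hmw : m ≤ w)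
    (hwK : w ≤ K) : w ^ e ≤ K ^ |e| * m ^ min e 0 := by
  rcases le_total 0 e with he | he
  · rw [min_eq_right he, rpow_zero, mul_one, abs_of_nonneg he]
    exact rpow_le_rpow (hm.le.trans hmw) hwK he
  · rw [min_eq_left he]
    calc w ^ e ≤ m ^ e := rpow_le_rpow_of_nonpos hm hmw he
      _ ≤ K ^ |e| * m ^ e :=
        le_mul_of_one_le_left (by positivity) (one_le_rpow hK (abs_nonneg e))

lemma exists_ball_subset_im_gt_of_upperHalfDisc {t : ℝ} (ht : 0 < t) :
    ∃ (c : ℂ) (R : ℝ), Metric.ball c R ⊆ {z | -t < z.im} ∧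
      ∀ z : ℂ, ‖z‖ ≤ 1 → 0 ≤ z.im → z ∈ Metric.ball c R := by
  set h : ℝ := 1 / (2 * t) with hh
  have h_pos : 0 < h := by positivity
  have hht : 2 * h * t = 1 := by rw [hh]; field_simp
  refine ⟨h * Complex.I, h + t, fun z hz ↦ ?_, fun z hz hz' ↦ ?_⟩
  · have him : |z.im - h| < h + t := by
      simpa using (Complex.abs_im_le_norm _).trans_lt (mem_ball_iff_norm.mp hz)
    have := (abs_lt.mp him).1
    exact mem_ofPred_eq.mpr (by linarith)
  · rw [mem_ball_iff_norm]
    refine lt_of_pow_lt_pow_left₀ 2 (by positivity) ?_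
    have hz1 : z.re ^ 2 + z.im ^ 2 ≤ 1 := by
      rw [sq, sq, ← Complex.normSq_apply, ← Complex.sq_norm]
      exact pow_le_one₀ (norm_nonneg z) hz
    rw [Complex.sq_norm, Complex.normSq_apply]
    simp only [Complex.sub_re, Complex.sub_im, Complex.mul_re, Complex.mul_im, Complex.ofReal_re,
      Complex.ofReal_im, Complex.I_re, Complex.I_im]
    nlinarith [mul_nonneg h_pos.le hz', sq_pos_of_pos ht]

lemma integral_segment_add_integral_arc_eq_zero {f : ℂ → ℂ} {t : ℝ} (ht : 0 < t)
    (hf : DifferentiableOn ℂ f {z | -t < z.im}) :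
    (∫ x in (-1 : ℝ)..1, f x) +
      ∫ θ in 0..π, f (Complex.exp (θ * Complex.I)) * (Complex.exp (θ * Complex.I) * Complex.I) =
        0 := by
  obtain ⟨c, R, hball, hmem⟩ := exists_ball_subset_im_gt_of_upperHalfDisc ht
  obtain ⟨g, hg⟩ := (hf.mono hball).isExactOn_ball
  have hseg (x : ℝ) (hx : x ∈ uIcc (-1 : ℝ) 1) : (x : ℂ) ∈ Metric.ball c R := by
    rw [uIcc_of_le (by norm_num)] at hx
    exact hmem x (by simpa [abs_le] using hx) (by simp)
  have harc (θ : ℝ) (hθ : θ ∈ uIcc 0 π) : Complex.exp (θ * Complex.I) ∈ Metric.ball c R := by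
    rw [uIcc_of_le pi_pos.le] at hθ
    exact hmem _ (Complex.norm_exp_ofReal_mul_I θ).le
      (by simpa using sin_nonneg_of_nonneg_of_le_pi hθ.1 hθ.2)
  have hcont : ContinuousOn f (Metric.ball c R) := (hf.mono hball).continuousOn
  have hseg_int : ∫ x in (-1 : ℝ)..1, f x = g (1 : ℝ) - g (-1 : ℝ) := by
    refine intervalIntegral.integral_eq_sub_of_hasDerivAt
      (f := fun x : ℝ ↦ g x) (fun x hx ↦ (hg x (hseg x hx)).comp_ofReal) ?_
    exact (hcont.comp Complex.continuous_ofReal.continuousOn hseg).intervalIntegrable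
  have harc_deriv (θ : ℝ) : HasDerivAt (fun θ : ℝ ↦ Complex.exp (θ * Complex.I))
      (Complex.exp (θ * Complex.I) * Complex.I) θ := by
    simpa using ((hasDerivAt_id (θ : ℂ)).mul_const Complex.I).cexp.comp_ofReal
  have harc_int : ∫ θ in 0..π, f (Complex.exp (θ * Complex.I)) *
      (Complex.exp (θ * Complex.I) * Complex.I) =
        g (Complex.exp ((π : ℝ) * Complex.I)) - g (Complex.exp ((0 : ℝ) * Complex.I)) := by
    refine intervalIntegral.integral_eq_sub_of_hasDerivAt
      (f := fun θ : ℝ ↦ g (Complex.exp (θ * Complex.I)))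
      (fun θ hθ ↦ (hg _ (harc θ hθ)).comp θ (harc_deriv θ)) ?_
    refine ((hcont.comp (by fun_prop) harc).mul ?_).intervalIntegrable
    fun_prop
  rw [hseg_int, harc_int]
  simp

lemma intervalIntegrable_abs_sub_rpow {e : ℝ} (he : -1 < e) (c a b : ℝ) :
    IntervalIntegrable (fun x ↦ |x - c| ^ e) volume a b := by
  have h : IntervalIntegrable (fun x : ℝ ↦ |x| ^ e) volume (a - c) (b - c) := by
    simpa only [Complex.norm_cpow_real, Complex.norm_real, norm_eq_abs] using
      (intervalIntegral.intervalIntegrable_cpow' (r := (e : ℂ)) (by simpa using he)).norm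
  simpa using h.comp_sub_right c

lemma ae_forall_ne {ι : Type*} [Countable ι] (c : ι → ℝ) : ∀ᵐ x : ℝ, ∀ i, x ≠ c i :=
  ae_all_iff.mpr fun i ↦ Measure.ae_ne volume (c i)

section Products

variable {ι : Type*} [Fintype ι]

lemma measurable_prod_abs_sub_rpow (c e : ι → ℝ) :
    Measurable fun x ↦ ∏ i, |x - c i| ^ e i := by
  fun_prop

lemma locallyIntegrable_prod_abs_sub_rpow {c e : ι → ℝ} (hc : Function.Injective c)
    (he : ∀ i, -1 < e i) : LocallyIntegrable fun x ↦ ∏ i, |x - c i| ^ e i := by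
  classical
  intro x₀
  have hfactor (i : ι) (hi : x₀ ≠ c i) : ContinuousAt (fun x ↦ |x - c i| ^ e i) x₀ :=
    ContinuousAt.rpow_const (by fun_prop) (Or.inl (abs_ne_zero.mpr (sub_ne_zero.mpr hi)))
  have hmeas := (measurable_prod_abs_sub_rpow c e).stronglyMeasurable.stronglyMeasurableAtFilter
    (l := 𝓝 x₀) (μ := volume)
  by_cases hx₀ : ∃ j, c j = x₀
  · obtain ⟨j, rfl⟩ := hx₀
    have hrest : ContinuousAt (fun x ↦ ∏ i ∈ Finset.univ.erase j, |x - c i| ^ e i) (c j) :=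
      tendsto_finsetProd _ fun i hi ↦ hfactor i (hc.ne (Finset.ne_of_mem_erase hi).symm)
    have hO : (fun x ↦ ∏ i, |x - c i| ^ e i) =O[𝓝 (c j)] fun x ↦ |x - c j| ^ e j := by
      simp only [← Finset.mul_prod_erase Finset.univ _ (Finset.mem_univ j)]
      simpa only [mul_one] using
        (Asymptotics.isBigO_refl (fun x ↦ |x - c j| ^ e j) (𝓝 (c j))).mul (hrest.isBigO_one ℝ)
    refine hO.integrableAtFilter hmeas ⟨Ioc (c j - 1) (c j + 1), Ioc_mem_nhds (by simp) (by simp),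
      (intervalIntegrable_iff_integrableOn_Ioc_of_le (by linarith)).mp
        (intervalIntegrable_abs_sub_rpow (he j) _ _ _)⟩
  · push Not at hx₀
    exact Filter.Tendsto.integrableAtFilter hmeas
      (volume.finiteAt_nhds x₀) (tendsto_finsetProd _ fun i _ ↦ hfactor i (hx₀ i).symm)

end Products

section SchwarzChristoffel

variable {ι : Type*} [Fintype ι]

/-- The Schwarz–Christoffel integrand `∏ᵢ (z - pᵢ) ^ eᵢ`, with principal branches; for branch points
`pᵢ` in the closed lower half-plane it is holomorphic on the open upper half-plane. -/
noncomputable def schwarzChristoffel (p : ι → ℂ) (e : ι → ℝ) (z : ℂ) : ℂ :=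
  ∏ i, (z - p i) ^ (e i : ℂ)

/-- The boundary values of `-Im (schwarzChristoffel c e)` on the real line, for real branch points
`c`: every `cᵢ > x` contributes the argument `π eᵢ`. -/
noncomputable def cutDensity (c e : ι → ℝ) (x : ℝ) : ℝ :=
  (∏ i, |x - c i| ^ e i) * sin (-(π * ∑ i with x < c i, e i))

/-- The integral of `schwarzChristoffel p e` over the upper unit half-circle, from `1` to `-1`. -/
noncomputable def schwarzChristoffelArc (p : ι → ℂ) (e : ι → ℝ) : ℂ :=
  ∫ θ in 0..π, schwarzChristoffel p e (Complex.exp (θ * Complex.I)) *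
    (Complex.exp (θ * Complex.I) * Complex.I)

lemma norm_schwarzChristoffel_ofReal (c e : ι → ℝ) (x : ℝ) :
    ‖schwarzChristoffel (fun i ↦ (c i : ℂ)) e x‖ = ∏ i, |x - c i| ^ e i := by
  simp only [schwarzChristoffel, norm_prod, Complex.norm_cpow_real, ← Complex.ofReal_sub,
    Complex.norm_real, norm_eq_abs]

lemma im_schwarzChristoffel_ofReal (c e : ι → ℝ) (x : ℝ) :
    (schwarzChristoffel (fun i ↦ (c i : ℂ)) e x).im = -cutDensity c e x := by
  simpa [schwarzChristoffel, cutDensity] using im_prod_ofReal_cpow (fun i ↦ x - c i) e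

lemma measurable_schwarzChristoffel (p : ι → ℂ) (e : ι → ℝ) :
    Measurable (schwarzChristoffel p e) := by
  unfold schwarzChristoffel
  fun_prop

lemma norm_schwarzChristoffel_le {p : ι → ℂ} {m : ι → ℝ} {K : ℝ} {z : ℂ} (e : ι → ℝ) (hK : 1 ≤ K)
    (hm : ∀ i, 0 < m i) (hmz : ∀ i, m i ≤ ‖z - p i‖) (hzK : ∀ i, ‖z - p i‖ ≤ K) :
    ‖schwarzChristoffel p e z‖ ≤ (∏ i, K ^ |e i|) * ∏ i, m i ^ min (e i) 0 := by
  rw [schwarzChristoffel, norm_prod, ← Finset.prod_mul_distrib]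
  refine Finset.prod_le_prod (fun i _ ↦ norm_nonneg _) fun i _ ↦ ?_
  rw [Complex.norm_cpow_real]
  exact rpow_le_rpow_abs_mul_rpow_min (e i) hK (hm i) (hmz i) (hzK i)

lemma differentiableOn_schwarzChristoffel {p : ι → ℂ} {t : ℝ} (e : ι → ℝ)
    (hp : ∀ i, (p i).im ≤ t) : DifferentiableOn ℂ (schwarzChristoffel p e) {z | t < z.im} := by
  refine DifferentiableOn.fun_finsetProd fun i _ z hz ↦ ?_
  refine DifferentiableWithinAt.cpow_const (by fun_prop) (Or.inr (ne_of_gt ?_))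
  simpa using (hp i).trans_lt hz

lemma continuousWithinAt_schwarzChristoffel_left {p : ι → ℂ} {z : ℂ} (e : ι → ℝ)
    (hp : ∀ i, z ≠ p i) : ContinuousWithinAt (fun q ↦ schwarzChristoffel q e z)
      {q | ∀ i, (q i).im ≤ z.im} p := by
  refine tendsto_finsetProd _ fun i _ ↦ ?_
  refine (continuousWithinAt_cpow_const_upperHalfPlane (sub_ne_zero.mpr (hp i)) (e i)).comp
    (t := {w | 0 ≤ w.im}) (f := fun q : ι → ℂ ↦ z - q i)
    (by fun_prop : Continuous _).continuousWithinAt fun q hq ↦ ?_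
  simpa using hq i

lemma tendsto_integral_schwarzChristoffel_segment {c e : ι → ℝ} (hc : Function.Injective c)
    (hc' : ∀ i, |c i| ≤ 1 / 2) (he : ∀ i, -1 < e i) :
    Tendsto (fun t : ℝ ↦ ∫ x in (-1 : ℝ)..1, schwarzChristoffel (fun i ↦ c i - t * Complex.I) e x)
      (𝓝[≥] 0) (𝓝 (∫ x in (-1 : ℝ)..1, schwarzChristoffel (fun i ↦ (c i : ℂ)) e x)) := by
  have hmin (i : ι) : -1 < min (e i) 0 := lt_min (he i) (by norm_num)
  refine intervalIntegral.tendsto_integral_filter_of_dominated_convergence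
    (fun x ↦ (∏ i, 2 ^ |e i|) * ∏ i, |x - c i| ^ min (e i) 0)
    (.of_forall fun t ↦ ((measurable_schwarzChristoffel _ e).comp
      Complex.measurable_ofReal).aestronglyMeasurable) ?_ ?_ ?_
  · filter_upwards [Icc_mem_nhdsGE (show (0 : ℝ) < 1 / 2 by norm_num)] with t ht
    filter_upwards [ae_forall_ne c] with x hx hx'
    rw [uIoc_of_le (by norm_num)] at hx'
    refine norm_schwarzChristoffel_le e one_le_two (fun i ↦ abs_pos.mpr (sub_ne_zero.mpr (hx i)))
      (fun i ↦ ?_) fun i ↦ ?_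
    · simpa using Complex.abs_re_le_norm ((x : ℂ) - (c i - t * Complex.I))
    · calc ‖(x : ℂ) - (c i - t * Complex.I)‖ = ‖(x : ℂ) - c i + t * Complex.I‖ := by ring_nf
        _ ≤ |x| + |c i| + |t| := by
          refine (norm_add_le _ _).trans (add_le_add ((norm_sub_le _ _).trans ?_) ?_) <;> simp
        _ ≤ 1 + 1 / 2 + 1 / 2 :=
          add_le_add (add_le_add (abs_le.mpr ⟨hx'.1.le, hx'.2⟩) (hc' i))
            ((abs_of_nonneg ht.1).trans_le ht.2)
        _ = 2 := by norm_num
  · exact ((locallyIntegrable_prod_abs_sub_rpow hc hmin).integrableOn_isCompact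
      isCompact_uIcc).intervalIntegrable.const_mul _
  · filter_upwards [ae_forall_ne c] with x hx _
    have hcont := continuousWithinAt_schwarzChristoffel_left e (p := fun i ↦ (c i : ℂ)) (z := x)
      fun i ↦ by exact_mod_cast hx i
    refine hcont.tendsto.comp (tendsto_nhdsWithin_iff.mpr ⟨?_, ?_⟩)
    · exact tendsto_nhdsWithin_of_tendsto_nhds (Continuous.tendsto' (by fun_prop) _ _ (by simp))
    · filter_upwards [self_mem_nhdsWithin] with t ht i
      simpa using ht

lemma continuousOn_schwarzChristoffelArc (e : ι → ℝ) :
    ContinuousOn (fun p : ι → ℂ ↦ schwarzChristoffelArc p e)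
      {p | ∀ i, (p i).im ≤ 0 ∧ ‖p i‖ ≤ 1 / 2} := by
  intro p hp
  have hmeas (q : ι → ℂ) : Measurable fun θ : ℝ ↦
      schwarzChristoffel q e (Complex.exp (θ * Complex.I)) *
        (Complex.exp (θ * Complex.I) * Complex.I) :=
    ((measurable_schwarzChristoffel q e).comp (by fun_prop)).mul (by fun_prop)
  have hnear (θ : ℝ) (q : ι → ℂ) (hq : ∀ i, (q i).im ≤ 0 ∧ ‖q i‖ ≤ 1 / 2) (i : ι) :
      1 / 2 ≤ ‖Complex.exp (θ * Complex.I) - q i‖ ∧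
        ‖Complex.exp (θ * Complex.I) - q i‖ ≤ 2 := by
    have hlow := norm_sub_norm_le (Complex.exp (θ * Complex.I)) (q i)
    have hup := norm_sub_le (Complex.exp (θ * Complex.I)) (q i)
    rw [Complex.norm_exp_ofReal_mul_I] at hlow hup
    constructor <;> linarith [(hq i).2]
  refine intervalIntegral.continuousWithinAt_of_dominated_interval
    (bound := fun _ ↦ (∏ i, 2 ^ |e i|) * ∏ i, (1 / 2) ^ min (e i) 0)
    (.of_forall fun q ↦ (hmeas q).aestronglyMeasurable) ?_ intervalIntegrable_const ?_
  · filter_upwards [self_mem_nhdsWithin] with q hq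
    filter_upwards with θ _
    simpa using norm_schwarzChristoffel_le e one_le_two (fun _ ↦ by norm_num)
      (fun i ↦ (hnear θ q hq i).1) fun i ↦ (hnear θ q hq i).2
  · filter_upwards with θ hθ
    rw [uIoc_of_le pi_pos.le] at hθ
    have hsin : 0 ≤ sin θ := sin_nonneg_of_nonneg_of_le_pi hθ.1.le hθ.2
    refine ((continuousWithinAt_schwarzChristoffel_left e fun i h ↦ ?_).mono
      fun q hq i ↦ ?_).mul continuousWithinAt_const
    · simpa [h] using (hnear θ p hp i).1.trans_lt' one_half_pos
    · simpa using (hq i).1.trans hsin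

lemma integral_schwarzChristoffel_segment_add_arc {c e : ι → ℝ} (hc : Function.Injective c)
    (hc' : ∀ i, |c i| ≤ 1 / 4) (he : ∀ i, -1 < e i) :
    (∫ x in (-1 : ℝ)..1, schwarzChristoffel (fun i ↦ (c i : ℂ)) e x) +
      schwarzChristoffelArc (fun i ↦ (c i : ℂ)) e = 0 := by
  -- Lowering the branch points by `t > 0` makes the integrand holomorphic across the real axis.
  set path : ℝ → ι → ℂ := fun t i ↦ c i - t * Complex.I
  have hnorm (i : ι) (t : ℝ) : ‖path t i‖ ≤ |c i| + |t| :=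
    (norm_sub_le _ _).trans (by simp)
  have hpath : Tendsto path (𝓝[>] 0)
      (𝓝[{p | ∀ i, (p i).im ≤ 0 ∧ ‖p i‖ ≤ 1 / 2}] fun i ↦ (c i : ℂ)) := by
    refine tendsto_nhdsWithin_iff.mpr ⟨?_, ?_⟩
    · exact tendsto_nhdsWithin_of_tendsto_nhds
        (Continuous.tendsto' (by fun_prop) _ _ (by simp [path]))
    · filter_upwards [Ioc_mem_nhdsGT (show (0 : ℝ) < 1 / 4 by norm_num)] with t ht i
      refine ⟨by simpa [path] using ht.1.le, ?_⟩
      linarith [hnorm i t, hc' i, abs_of_pos ht.1, ht.2]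
  have harc := (continuousOn_schwarzChristoffelArc e (fun i ↦ (c i : ℂ)) fun i ↦
    ⟨by simp, by simpa using (hc' i).trans (by norm_num)⟩).tendsto.comp hpath
  have hseg := (tendsto_integral_schwarzChristoffel_segment hc
    (fun i ↦ (hc' i).trans (by norm_num)) he).mono_left (nhdsWithin_mono 0 Ioi_subset_Ici_self)
  refine tendsto_nhds_unique (hseg.add harc) (tendsto_const_nhds.congr' ?_)
  filter_upwards [self_mem_nhdsWithin] with t ht
  exact (integral_segment_add_integral_arc_eq_zero ht
    (differentiableOn_schwarzChristoffel e fun i ↦ by simp)).symm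

lemma schwarzChristoffelArc_zero {e : ι → ℝ} (he : ∑ i, e i = -1) :
    schwarzChristoffelArc (fun _ ↦ 0) e = π * Complex.I := by
  have hinv {z : ℂ} (hz : z ≠ 0) : schwarzChristoffel (fun _ ↦ 0) e z = z⁻¹ := by
    simp only [schwarzChristoffel, sub_zero, Complex.cpow_def_of_ne_zero hz]
    rw [← Complex.exp_sum, ← Finset.mul_sum, ← Complex.ofReal_sum, he]
    simp [Complex.exp_neg, Complex.exp_log hz]
  simp [schwarzChristoffelArc, hinv (Complex.exp_ne_zero _)]

lemma integral_cutDensity_segment {c e : ι → ℝ} (hc : Function.Injective c)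
    (hc' : ∀ i, |c i| ≤ 1 / 4) (he : ∀ i, -1 < e i) :
    ∫ x in (-1 : ℝ)..1, cutDensity c e x = (schwarzChristoffelArc (fun i ↦ (c i : ℂ)) e).im := by
  have hint : IntervalIntegrable
      (fun x : ℝ ↦ schwarzChristoffel (fun i ↦ (c i : ℂ)) e x) volume (-1) 1 := by
    refine ((locallyIntegrable_prod_abs_sub_rpow hc he).integrableOn_isCompact
      isCompact_uIcc).intervalIntegrable.mono_fun
      ((measurable_schwarzChristoffel _ e).comp Complex.measurable_ofReal).aestronglyMeasurable
      (.of_forall fun x ↦ ?_)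
    exact (norm_schwarzChristoffel_ofReal c e x).trans_le (le_abs_self _)
  have him := Complex.imCLM.intervalIntegral_comp_comm hint
  simp only [Complex.imCLM_apply, im_schwarzChristoffel_ofReal,
    intervalIntegral.integral_neg] at him
  rw [← neg_eq_iff_eq_neg.mpr (eq_neg_of_add_eq_zero_left
    (integral_schwarzChristoffel_segment_add_arc hc hc' he)), Complex.neg_im, ← him, neg_neg]

lemma cutDensity_const_mul {l : ℝ} (hl : 0 < l) (c e : ι → ℝ) (x : ℝ) :
    cutDensity (fun i ↦ l * c i) e (l * x) = l ^ (∑ i, e i) * cutDensity c e x := by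
  simp only [cutDensity, ← mul_sub, abs_mul, abs_of_pos hl, mul_rpow hl.le (abs_nonneg _),
    Finset.prod_mul_distrib, ← rpow_sum_of_pos hl, mul_lt_mul_iff_right₀ hl, mul_assoc]

lemma cutDensity_eq_zero {c e : ι → ℝ} (he : ∑ i, e i = -1) {x : ℝ} (hx : ∀ i, |c i| < |x|) :
    cutDensity c e x = 0 := by
  rcases le_total 0 x with h | h
  · have hright (i : ι) : ¬x < c i := by
      have := hx i
      rw [abs_of_nonneg h] at this
      exact not_lt.mpr ((le_abs_self _).trans this.le)
    simp [cutDensity, hright]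
  · have hleft (i : ι) : x < c i := by
      have := hx i
      rw [abs_of_nonpos h] at this
      exact neg_lt_of_abs_lt this |>.trans_le' (by simp)
    simp [cutDensity, hleft, he]

lemma measurable_cutDensity (c e : ι → ℝ) : Measurable (cutDensity c e) := by
  have hfilter : (fun x ↦ ∑ i with x < c i, e i) = fun x ↦ ∑ i, if x < c i then e i else 0 :=
    funext fun x ↦ Finset.sum_filter _ _
  refine (measurable_prod_abs_sub_rpow c e).mul (measurable_sin.comp (Measurable.neg ?_))
  refine Measurable.const_mul ?_ π
  rw [hfilter]
  exact Finset.measurable_fun_sum _ fun i _ ↦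
    Measurable.ite measurableSet_Iio measurable_const measurable_const

lemma integrable_cutDensity {c e : ι → ℝ} (hc : Function.Injective c) (he : ∀ i, -1 < e i)
    (he' : ∑ i, e i = -1) : Integrable (cutDensity c e) := by
  have hsupp : Function.support (cutDensity c e) ⊆ Metric.closedBall 0 (∑ i, |c i|) := by
    intro x hx
    contrapose! hx
    refine Function.notMem_support.mpr (cutDensity_eq_zero he' fun i ↦ ?_)
    refine (Finset.single_le_sum (fun j _ ↦ abs_nonneg (c j)) (Finset.mem_univ i)).trans_lt ?_
    simpa using hx
  rw [← integrableOn_iff_integrable_of_support_subset hsupp]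
  refine ((locallyIntegrable_prod_abs_sub_rpow hc he).integrableOn_isCompact
    (isCompact_closedBall 0 _)).mono' (measurable_cutDensity c e).aestronglyMeasurable
    (.of_forall fun x ↦ ?_)
  have hprod : 0 ≤ ∏ i, |x - c i| ^ e i := by positivity
  rw [cutDensity, norm_mul, norm_of_nonneg hprod]
  exact mul_le_of_le_one_right hprod (abs_sin_le_one _)

lemma integral_cutDensity_eq_integral_segment {c e : ι → ℝ} (hc : ∀ i, |c i| < 1)
    (he : ∑ i, e i = -1) : ∫ x, cutDensity c e x = ∫ x in (-1 : ℝ)..1, cutDensity c e x := by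
  refine (intervalIntegral.integral_eq_integral_of_support_subset fun x hx ↦ ?_).symm
  contrapose! hx
  refine Function.notMem_support.mpr (cutDensity_eq_zero he fun i ↦ (hc i).trans_le ?_)
  simp only [mem_Ioc, not_and_or, not_lt, not_le] at hx
  exact le_abs'.mpr (hx.imp_right le_of_lt)

lemma integral_cutDensity_const_mul {l : ℝ} (hl : 0 < l) {e : ι → ℝ} (c : ι → ℝ)
    (he : ∑ i, e i = -1) : ∫ x, cutDensity (fun i ↦ l * c i) e x = ∫ x, cutDensity c e x := by
  have h := Measure.integral_comp_mul_left (cutDensity (fun i ↦ l * c i) e) l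
  simp only [cutDensity_const_mul hl, he, rpow_neg_one, integral_const_mul,
    abs_of_pos (inv_pos.mpr hl), smul_eq_mul] at h
  exact (mul_left_cancel₀ (inv_ne_zero hl.ne') h).symm

theorem integral_cutDensity {c e : ι → ℝ} (hc : Function.Injective c) (he : ∀ i, -1 < e i)
    (he' : ∑ i, e i = -1) : ∫ x, cutDensity c e x = π := by
  set path : ℝ → ι → ℂ := fun l i ↦ (l * c i : ℝ)
  have hsmall : ∀ᶠ l : ℝ in 𝓝[>] 0, ∀ i, |l * c i| ≤ 1 / 4 := by
    refine eventually_all.mpr fun i ↦ ?_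
    have : Tendsto (fun l : ℝ ↦ |l * c i|) (𝓝[>] 0) (𝓝 0) :=
      tendsto_nhdsWithin_of_tendsto_nhds (Continuous.tendsto' (by fun_prop) _ _ (by simp))
    exact this.eventually_le_const (by norm_num)
  have hpath : Tendsto path (𝓝[>] 0)
      (𝓝[{p | ∀ i, (p i).im ≤ 0 ∧ ‖p i‖ ≤ 1 / 2}] fun _ ↦ 0) := by
    refine tendsto_nhdsWithin_iff.mpr ⟨?_, ?_⟩
    · exact tendsto_nhdsWithin_of_tendsto_nhds
        (Continuous.tendsto' (by fun_prop) _ _ (by ext; simp [path]))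
    · filter_upwards [hsmall] with l hl i
      exact ⟨by simp [path], (Complex.norm_real _).trans_le ((hl i).trans (by norm_num))⟩
  have harc := (continuousOn_schwarzChristoffelArc e (fun _ ↦ 0)
    (by simp)).tendsto.comp hpath
  rw [schwarzChristoffelArc_zero he'] at harc
  have him := (Complex.continuous_im.tendsto _).comp harc
  simp only [Complex.im_ofReal_mul, Complex.I_im, mul_one] at him
  refine tendsto_nhds_unique (tendsto_const_nhds.congr' ?_) him
  filter_upwards [hsmall, self_mem_nhdsWithin] with l hl hl0
  rw [← integral_cutDensity_const_mul hl0 c he', integral_cutDensity_eq_integral_segment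
    (fun i ↦ (hl i).trans_lt (by norm_num)) he', integral_cutDensity_segment
    (fun i j h ↦ hc (mul_left_cancel₀ hl0.ne' h)) hl he]
  rfl

end SchwarzChristoffel

lemma lintegral_eq_lintegral_comp_inv (f : ℝ → ENNReal) :
    ∫⁻ x, f x = ∫⁻ x, ENNReal.ofReal ((x ^ 2)⁻¹) * f x⁻¹ := by
  have himage : (fun x : ℝ ↦ x⁻¹) '' {0}ᶜ = {0}ᶜ := by
    simp
  have h := lintegral_image_eq_lintegral_abs_deriv_mul
    (measurableSet_singleton (0 : ℝ)).compl (fun x hx ↦ (hasDerivAt_inv hx).hasDerivWithinAt)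
    inv_injective.injOn f
  have hae : ({0}ᶜ : Set ℝ) =ᵐ[volume] univ := by
    simp [ae_eq_univ]
  rw [himage, setLIntegral_congr hae, setLIntegral_congr hae] at h
  simpa using h

section Chord

/-- The one-variable profile of `uSigma`, as a function of the power `1 - ‖y‖ ^ 2` of the point `y`
with respect to the unit sphere and up to a constant depending only on the dimension
(see `uSigma_eq`). -/
noncomputable def uSigmaProfile (s σ p : ℝ) : ℝ :=
  if 0 < p then sin (π * s) * p ^ (-σ)
  else if p < 0 then sin (π * (s + σ)) * (-p) ^ (-σ)
  else 0

lemma uSigmaProfile_of_ne_zero (s σ : ℝ) {p : ℝ} (hp : p ≠ 0) :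
    uSigmaProfile s σ p = sin (π * if p < 0 then s + σ else s) * |p| ^ (-σ) := by
  rcases hp.lt_or_gt with h | h
  · simp [uSigmaProfile, h, h.not_gt, abs_of_neg]
  · simp [uSigmaProfile, h, h.not_gt, abs_of_pos]

lemma measurable_uSigmaProfile (s σ : ℝ) : Measurable (uSigmaProfile s σ) := by
  unfold uSigmaProfile
  refine Measurable.ite measurableSet_Ioi (by fun_prop)
    (Measurable.ite measurableSet_Iio (by fun_prop) measurable_const)

lemma sin_pi_mul_nonneg {t : ℝ} (ht : t ∈ Icc (0 : ℝ) 1) : 0 ≤ sin (π * t) :=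
  sin_nonneg_of_nonneg_of_le_pi (mul_nonneg pi_pos.le ht.1) (mul_le_of_le_one_right pi_pos.le ht.2)

lemma uSigmaProfile_nonneg {s σ : ℝ} (hs : s ∈ Icc (0 : ℝ) 1) (hσ : s + σ ∈ Icc (0 : ℝ) 1)
    (p : ℝ) : 0 ≤ uSigmaProfile s σ p := by
  unfold uSigmaProfile
  split_ifs with hp hp'
  · exact mul_nonneg (sin_pi_mul_nonneg hs) (rpow_nonneg hp.le _)
  · exact mul_nonneg (sin_pi_mul_nonneg hσ) (rpow_nonneg (neg_pos.mpr hp').le _)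
  · exact le_rfl

/-- The polar density of the mean value integral on a line through the centre of the excluded ball,
where `ρ` is the signed distance to the centre and `ρ = a`, `ρ = -b` are the points of the unit
sphere; constants are dropped. -/
noncomputable def chordDensity (s σ r a b ρ : ℝ) : ℝ :=
  if r < |ρ| then |ρ|⁻¹ * (ρ ^ 2 - r ^ 2) ^ (-s) * uSigmaProfile s σ ((a - ρ) * (b + ρ)) else 0

/-- The images of the singularities `-r, -b, ∞, a, r` of `chordDensity` under `ρ ↦ ρ⁻¹`. -/
noncomputable def chordPoints (r a b : ℝ) : Fin 5 → ℝ := ![-r⁻¹, -b⁻¹, 0, a⁻¹, r⁻¹]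

/-- The exponents of `chordDensity` at the points `chordPoints`. -/
noncomputable def chordExponents (s σ : ℝ) : Fin 5 → ℝ := ![-s, -σ, 2 * s - 1 + 2 * σ, -σ, -s]

variable {s σ r a b : ℝ}

lemma chordPoints_strictMono (hr : 0 < r) (ha : r < a) (hb : r < b) :
    StrictMono (chordPoints r a b) := by
  have hra := inv_strictAnti₀ hr ha
  have hrb := inv_strictAnti₀ hr hb
  refine Fin.strictMono_iff_lt_succ.mpr fun i ↦ ?_
  fin_cases i <;> simp [chordPoints, hra, hrb, hr.trans ha, hr.trans hb]

lemma chordExponents_sum (s σ : ℝ) : ∑ i, chordExponents s σ i = -1 := by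
  simp [chordExponents, Fin.sum_univ_five]
  ring

lemma neg_one_lt_chordExponents (hs : s < 1) (hσ : -s < σ) (hσ' : σ < 1) (i : Fin 5) :
    -1 < chordExponents s σ i := by
  fin_cases i <;> simp [chordExponents] <;> linarith

lemma sub_inv_mul_add_inv {x : ℝ} (ha : a ≠ 0) (hb : b ≠ 0) (hx : x ≠ 0) :
    (a - x⁻¹) * (b + x⁻¹) = a * b / x ^ 2 * ((x - a⁻¹) * (x + b⁻¹)) := by
  field_simp

lemma sub_inv_mul_add_inv_neg_iff {x : ℝ} (ha : 0 < a) (hb : 0 < b) (hx : x ≠ 0) :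
    (a - x⁻¹) * (b + x⁻¹) < 0 ↔ -b⁻¹ < x ∧ x < a⁻¹ := by
  have ha' : 0 < a⁻¹ := inv_pos.mpr ha
  have hb' : 0 < b⁻¹ := inv_pos.mpr hb
  have hab : 0 < a * b / x ^ 2 := div_pos (mul_pos ha hb) (pow_two_pos_of_ne_zero hx)
  rw [sub_inv_mul_add_inv ha.ne' hb.ne' hx, ← smul_eq_mul, smul_neg_iff_of_pos_left hab]
  constructor
  · intro h
    constructor <;> nlinarith
  · rintro ⟨h₁, h₂⟩
    exact mul_neg_of_neg_of_pos (sub_neg.mpr h₂) (neg_lt_iff_pos_add.mp h₁)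

lemma prod_abs_sub_chordPoints_rpow {x : ℝ} (hr : 0 < r) (ha : 0 < a) (hb : 0 < b) (hx : x ≠ 0) :
    (x ^ 2)⁻¹ * (|x⁻¹|⁻¹ * |x⁻¹ ^ 2 - r ^ 2| ^ (-s) * |(a - x⁻¹) * (b + x⁻¹)| ^ (-σ)) =
      r ^ (-(2 * s)) * (a * b) ^ (-σ) *
        ∏ i, |x - chordPoints r a b i| ^ chordExponents s σ i := by
  have hx₀ : 0 < |x| := abs_pos.mpr hx
  have hball : |x⁻¹ ^ 2 - r ^ 2| = r ^ 2 * |x - r⁻¹| * |x + r⁻¹| / |x| ^ 2 := by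
    have h : x⁻¹ ^ 2 - r ^ 2 = -(r ^ 2 * (x - r⁻¹) * (x + r⁻¹) / x ^ 2) := by
      field_simp
      ring
    rw [h, abs_neg, abs_div, abs_mul, abs_mul, abs_pow, abs_pow, abs_of_pos hr]
  have hsphere : |(a - x⁻¹) * (b + x⁻¹)| = a * b * |x - a⁻¹| * |x + b⁻¹| / |x| ^ 2 := by
    rw [sub_inv_mul_add_inv ha.ne' hb.ne' hx, abs_mul, abs_mul, abs_div, abs_pow,
      abs_of_pos (mul_pos ha hb)]
    ring
  have hmid : |x| ^ (2 * s - 1 + 2 * σ) = |x| ^ (2 * s) * |x| ^ (2 * σ) * |x|⁻¹ := by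
    rw [sub_add_eq_add_sub, sub_eq_add_neg, rpow_add hx₀, rpow_add hx₀, rpow_neg_one]
  have hpow (t : ℝ) : (|x| ^ 2) ^ (-t) = (|x| ^ (2 * t))⁻¹ := by
    rw [← rpow_natCast, ← rpow_mul hx₀.le, ← rpow_neg hx₀.le]
    congr 1
    push_cast
    ring
  have hr' : (r ^ 2) ^ (-s) = r ^ (-(2 * s)) := by
    rw [← rpow_natCast, ← rpow_mul hr.le]
    congr 1
    push_cast
    ring
  have hX : (x ^ 2)⁻¹ * |x⁻¹|⁻¹ = |x|⁻¹ := by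
    rw [abs_inv, inv_inv, ← sq_abs]
    field_simp
  rw [hball, hsphere, ← mul_assoc, ← mul_assoc, hX, div_rpow (by positivity) (by positivity),
    div_rpow (by positivity) (by positivity), hpow, hpow, mul_rpow (by positivity) (by positivity),
    mul_rpow (by positivity) (by positivity), mul_rpow (by positivity) (by positivity),
    mul_rpow (by positivity) (by positivity), hr']
  simp only [chordPoints, chordExponents, Fin.prod_univ_five, Matrix.cons_val, sub_zero,
    sub_neg_eq_add, hmid, div_inv_eq_mul]
  ring

lemma sum_chordExponents_filter_lt (s σ : ℝ) (hr : 0 < r) (ha : r < a) (hb : r < b) (x : ℝ) :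
    ∑ i with x < chordPoints r a b i, chordExponents s σ i =
      if x < -r⁻¹ then -1
      else if x < -b⁻¹ then s - 1
      else if x < 0 then s + σ - 1
      else if x < a⁻¹ then -(s + σ)
      else if x < r⁻¹ then -s
      else 0 := by
  have hra := inv_strictAnti₀ hr ha
  have hrb := inv_strictAnti₀ hr hb
  have ha₀ : 0 < a⁻¹ := inv_pos.mpr (hr.trans ha)
  have hb₀ : 0 < b⁻¹ := inv_pos.mpr (hr.trans hb)
  rw [Finset.sum_filter, Fin.sum_univ_five]
  change (if x < -r⁻¹ then -s else 0) + (if x < -b⁻¹ then -σ else 0) +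
    (if x < 0 then 2 * s - 1 + 2 * σ else 0) + (if x < a⁻¹ then -σ else 0) +
    (if x < r⁻¹ then -s else 0) = _
  split_ifs <;> linarith

lemma sin_sum_chordExponents_filter_lt {x : ℝ} (hr : 0 < r) (ha : r < a) (hb : r < b)
    (hx : ∀ i, x ≠ chordPoints r a b i) :
    sin (-(π * ∑ i with x < chordPoints r a b i, chordExponents s σ i)) =
      if r < |x⁻¹| then sin (π * if (a - x⁻¹) * (b + x⁻¹) < 0 then s + σ else s) else 0 := by
  have hra := inv_strictAnti₀ hr ha
  have hrb := inv_strictAnti₀ hr hb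
  have ha₀ : 0 < a⁻¹ := inv_pos.mpr (hr.trans ha)
  have hb₀ : 0 < b⁻¹ := inv_pos.mpr (hr.trans hb)
  have hx₀ : x ≠ 0 := hx 2
  have hball : r < |x⁻¹| ↔ -r⁻¹ < x ∧ x < r⁻¹ := by
    rw [abs_inv, lt_inv_comm₀ hr (abs_pos.mpr hx₀), abs_lt]
  have hsphere := sub_inv_mul_add_inv_neg_iff (hr.trans ha) (hr.trans hb) hx₀
  have hsin (t : ℝ) : sin (-(π * (t - 1))) = sin (π * t) := by
    rw [← sin_pi_sub]
    ring_nf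
  have h₀ : x ≠ -r⁻¹ := hx 0
  have h₁ : x ≠ -b⁻¹ := hx 1
  rw [sum_chordExponents_filter_lt s σ hr ha hb]
  simp only [hball, hsphere]
  rcases h₀.lt_or_gt with h | h
  · rw [if_pos h, if_neg fun h' ↦ h.not_gt h'.1, mul_neg_one, neg_neg, sin_pi]
  rcases h₁.lt_or_gt with h' | h'
  · rw [if_neg h.not_gt, if_pos h', if_pos ⟨h, by linarith⟩, if_neg fun h'' ↦ h'.not_gt h''.1, hsin]
  rw [if_neg h.not_gt, if_neg h'.not_gt]
  rcases hx₀.lt_or_gt with hneg | hpos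
  · rw [if_pos hneg, if_pos ⟨h, by linarith⟩, if_pos ⟨h', by linarith⟩, hsin]
  simp only [hpos.not_gt, h, h', true_and, if_false]
  split_ifs with h₃ h₄ h₄
  all_goals first | linarith | simp only [mul_neg, neg_neg, mul_zero, neg_zero, sin_zero]

lemma inv_sq_mul_chordDensity_inv {x : ℝ} (hr : 0 < r) (ha : r < a) (hb : r < b)
    (hx : ∀ i, x ≠ chordPoints r a b i) :
    (x ^ 2)⁻¹ * chordDensity s σ r a b x⁻¹ = r ^ (-(2 * s)) * (a * b) ^ (-σ) *
      cutDensity (chordPoints r a b) (chordExponents s σ) x := by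
  have hx₀ : x ≠ 0 := hx 2
  have hxa : a - x⁻¹ ≠ 0 := fun h ↦ hx 3 (by simp [chordPoints, sub_eq_zero.mp h])
  have hxb : b + x⁻¹ ≠ 0 := fun h ↦ hx 1 (by simp [chordPoints, eq_neg_of_add_eq_zero_left h])
  rw [cutDensity, ← mul_assoc, ← prod_abs_sub_chordPoints_rpow hr (hr.trans ha) (hr.trans hb) hx₀,
    sin_sum_chordExponents_filter_lt hr ha hb hx, chordDensity]
  by_cases hxr : r < |x⁻¹|
  · rw [if_pos hxr, if_pos hxr, uSigmaProfile_of_ne_zero s σ (mul_ne_zero hxa hxb),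
      abs_of_pos (a := x⁻¹ ^ 2 - r ^ 2)]
    · ring
    · rw [← sq_abs]
      exact sub_pos.mpr (pow_lt_pow_left₀ hxr hr.le two_ne_zero)
  · rw [if_neg hxr, if_neg hxr, mul_zero, mul_zero]

lemma chordDensity_nonneg (hs : s ∈ Icc (0 : ℝ) 1) (hσ : s + σ ∈ Icc (0 : ℝ) 1)
    (hr : 0 ≤ r) (ρ : ℝ) : 0 ≤ chordDensity s σ r a b ρ := by
  unfold chordDensity
  split_ifs with hρ
  · have hball : 0 ≤ ρ ^ 2 - r ^ 2 :=
      sub_nonneg.mpr (sq_abs ρ ▸ pow_le_pow_left₀ hr hρ.le 2)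
    exact mul_nonneg (mul_nonneg (inv_nonneg.mpr (abs_nonneg ρ)) (rpow_nonneg hball _))
      (uSigmaProfile_nonneg hs hσ _)
  · exact le_rfl

lemma lintegral_chordDensity (hs : s ∈ Ico (0 : ℝ) 1) (hσ : σ ∈ Ioo (-s) (1 - s)) (hr : 0 < r)
    (ha : r < a) (hb : r < b) :
    ∫⁻ ρ, ENNReal.ofReal (chordDensity s σ r a b ρ) =
      ENNReal.ofReal (π * (r ^ (-(2 * s)) * (a * b) ^ (-σ))) := by
  set C : ℝ := r ^ (-(2 * s)) * (a * b) ^ (-σ)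
  have hinj := (chordPoints_strictMono hr ha hb).injective
  have hexp := neg_one_lt_chordExponents hs.2 hσ.1 (by linarith [hσ.2, hs.1])
  have hpullback : ∀ᵐ x, (x ^ 2)⁻¹ * chordDensity s σ r a b x⁻¹ =
      C * cutDensity (chordPoints r a b) (chordExponents s σ) x := by
    filter_upwards [ae_forall_ne (chordPoints r a b)] with x hx
    exact inv_sq_mul_chordDensity_inv hr ha hb hx
  have hnonneg : 0 ≤ᵐ[volume] fun x ↦
      C * cutDensity (chordPoints r a b) (chordExponents s σ) x := by
    filter_upwards [hpullback] with x hx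
    rw [← hx]
    exact mul_nonneg (by positivity) (chordDensity_nonneg (Ico_subset_Icc_self hs)
      ⟨by linarith [hσ.1], by linarith [hσ.2]⟩ hr.le _)
  calc ∫⁻ ρ, ENNReal.ofReal (chordDensity s σ r a b ρ)
      = ∫⁻ x, ENNReal.ofReal ((x ^ 2)⁻¹) * ENNReal.ofReal (chordDensity s σ r a b x⁻¹) :=
        lintegral_eq_lintegral_comp_inv _
    _ = ∫⁻ x, ENNReal.ofReal (C * cutDensity (chordPoints r a b) (chordExponents s σ) x) := by
        refine lintegral_congr_ae ?_
        filter_upwards [hpullback] with x hx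
        rw [← ENNReal.ofReal_mul (by positivity), hx]
    _ = ENNReal.ofReal (∫ x, C * cutDensity (chordPoints r a b) (chordExponents s σ) x) :=
        (ofReal_integral_eq_lintegral_ofReal ((integrable_cutDensity hinj hexp
          (chordExponents_sum s σ)).const_mul C) hnonneg).symm
    _ = ENNReal.ofReal (π * C) := by
        rw [integral_const_mul, integral_cutDensity hinj hexp (chordExponents_sum s σ), mul_comm]

end Chord

lemma lintegral_eq_lintegral_Ioi_add_comp_neg {f : ℝ → ENNReal} (hf : Measurable f) :
    ∫⁻ x, f x = ∫⁻ x in Ioi 0, (f x + f (-x)) := by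
  have hneg : ∫⁻ x in Ioi 0, f (-x) = ∫⁻ x in (Ioi 0)ᶜ, f x := by
    have h := (Measure.measurePreserving_neg (volume : Measure ℝ)).setLIntegral_comp_preimage_emb
      (MeasurableEquiv.neg ℝ).measurableEmbedding f (Iio 0)
    rw [neg_preimage, neg_Iio, neg_zero] at h
    rw [h, compl_Ioi, setLIntegral_congr Iio_ae_eq_Iic]
  rw [lintegral_add_left hf, hneg, lintegral_add_compl f measurableSet_Ioi]

section Polar

variable {E : Type*} [NormedAddCommGroup E] [NormedSpace ℝ E] [FiniteDimensional ℝ E]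
  [Nontrivial E] [MeasurableSpace E] [BorelSpace E] (μ : Measure E) [μ.IsAddHaarMeasure]

lemma lintegral_eq_lintegral_toSphere_Ioi {f : E → ENNReal} (hf : Measurable f) :
    ∫⁻ y, f y ∂μ = ∫⁻ ω, (∫⁻ ρ in Ioi (0 : ℝ),
      ENNReal.ofReal (ρ ^ (Module.finrank ℝ E - 1)) * f (ρ • (ω : E))) ∂μ.toSphere := by
  have hpolar := μ.measurePreserving_homeomorphUnitSphereProd
  have hsmul : Measurable fun p : Metric.sphere (0 : E) 1 × Ioi (0 : ℝ) ↦
      f ((p.2 : ℝ) • (p.1 : E)) := hf.comp (by fun_prop)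
  calc ∫⁻ y, f y ∂μ
      = ∫⁻ y : ({0}ᶜ : Set E), f y ∂μ.comap (↑) := by
        rw [lintegral_subtype_comap (measurableSet_singleton _).compl f, restrict_compl_singleton]
    _ = ∫⁻ p, f ((p.2 : ℝ) • (p.1 : E))
          ∂μ.toSphere.prod (.volumeIoiPow (Module.finrank ℝ E - 1)) := by
        rw [← hpolar.lintegral_comp hsmul]
        refine lintegral_congr fun y ↦ congrArg f ?_
        simp [smul_smul, norm_ne_zero_iff.mpr y.2]
    _ = ∫⁻ ω, (∫⁻ ρ in Ioi (0 : ℝ),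
          ENNReal.ofReal (ρ ^ (Module.finrank ℝ E - 1)) * f (ρ • (ω : E))) ∂μ.toSphere := by
        rw [lintegral_prod _ hsmul.aemeasurable]
        refine lintegral_congr fun ω ↦ ?_
        exact (lintegral_withDensity_eq_lintegral_mul _ (by fun_prop)
          (hsmul.comp (measurable_prodMk_left (x := ω)))).trans
          (lintegral_subtype_comap measurableSet_Ioi
            fun ρ ↦ ENNReal.ofReal (ρ ^ (Module.finrank ℝ E - 1)) * f (ρ • (ω : E)))

lemma two_mul_lintegral_eq_lintegral_toSphere_lines {f : E → ENNReal} (hf : Measurable f) :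
    2 * ∫⁻ y, f y ∂μ = ∫⁻ ω, (∫⁻ ρ : ℝ,
      ENNReal.ofReal (|ρ| ^ (Module.finrank ℝ E - 1)) * f (ρ • (ω : E))) ∂μ.toSphere := by
  have hneg : ∫⁻ y, f (-y) ∂μ = ∫⁻ y, f y ∂μ :=
    (Measure.measurePreserving_neg μ).lintegral_comp hf
  rw [two_mul]
  nth_rw 2 [← hneg]
  rw [← lintegral_add_left hf,
    lintegral_eq_lintegral_toSphere_Ioi μ (f := fun y ↦ f y + f (-y))
      (hf.add (hf.comp measurable_neg))]
  refine lintegral_congr fun ω ↦ ?_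
  have hline : Measurable fun ρ : ℝ ↦
      ENNReal.ofReal (|ρ| ^ (Module.finrank ℝ E - 1)) * f (ρ • (ω : E)) :=
    (by fun_prop : Measurable fun ρ : ℝ ↦ ENNReal.ofReal (|ρ| ^ (Module.finrank ℝ E - 1))).mul
      (hf.comp (by fun_prop))
  rw [lintegral_eq_lintegral_Ioi_add_comp_neg hline]
  refine setLIntegral_congr_fun measurableSet_Ioi fun ρ hρ ↦ ?_
  simp only [abs_neg, abs_of_pos (mem_Ioi.mp hρ), neg_smul, mul_add]

end Polar

lemma toSphere_volume_univ_euclideanSpace {n : ℕ} (hn : 1 ≤ n) :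
    (volume : Measure (EuclideanSpace ℝ (Fin n))).toSphere univ =
      ENNReal.ofReal (2 * π ^ ((n : ℝ) / 2) / Gamma ((n : ℝ) / 2)) := by
  have : Nonempty (Fin n) := ⟨⟨0, hn⟩⟩
  have hn₀ : (0 : ℝ) < n := by exact_mod_cast hn
  have hpow : √π ^ n = π ^ ((n : ℝ) / 2) := by
    rw [sqrt_eq_rpow, ← rpow_natCast, ← rpow_mul pi_pos.le, one_div_mul_eq_div]
  rw [Measure.toSphere_apply_univ, EuclideanSpace.volume_ball, finrank_euclideanSpace,
    Fintype.card_fin, ENNReal.ofReal_one, one_pow, one_mul, ← ENNReal.ofReal_natCast n,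
    ← ENNReal.ofReal_mul hn₀.le, Gamma_add_one (half_pos hn₀).ne', hpow]
  congr 1
  field_simp

lemma exists_chord_of_add_norm_lt_one {E : Type*} [NormedAddCommGroup E] [InnerProductSpace ℝ E]
    {x ω : E} {r : ℝ} (hr : 0 ≤ r) (hrx : r + ‖x‖ < 1) (hω : ‖ω‖ = 1) :
    ∃ a b : ℝ, r < a ∧ r < b ∧ a * b = 1 - ‖x‖ ^ 2 ∧
      ∀ ρ : ℝ, 1 - ‖x + ρ • ω‖ ^ 2 = (a - ρ) * (b + ρ) := by
  set β : ℝ := inner ℝ x ω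
  set d : ℝ := √(β ^ 2 + 1 - ‖x‖ ^ 2)
  have hβ : |β| ≤ ‖x‖ := by simpa [hω] using abs_real_inner_le_norm x ω
  obtain ⟨hβ₁, hβ₂⟩ := abs_le.mp hβ
  have hd : d ^ 2 = β ^ 2 + 1 - ‖x‖ ^ 2 := sq_sqrt (by nlinarith [norm_nonneg x])
  have hrβ : r + |β| < d := by
    refine lt_sqrt_of_sq_lt ?_
    nlinarith [norm_nonneg x, abs_nonneg β, sq_abs β]
  refine ⟨-β + d, β + d, by linarith [le_abs_self β], by linarith [neg_abs_le β],
    by linear_combination hd, fun ρ ↦ ?_⟩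
  rw [norm_add_sq_real, inner_smul_right, norm_smul, hω, mul_one, norm_eq_abs, sq_abs]
  linear_combination -hd

section MeanValue

/-- The factor of `cns` depending only on the dimension, which is `2 / (π * |S|)` for the area `|S|`
of the unit sphere of `ℝⁿ`. -/
noncomputable def cnsFactor (n : ℕ) : ℝ :=
  Gamma ((n : ℝ) / 2) / π ^ ((1 : ℝ) + (n : ℝ) / 2)

lemma cnsFactor_nonneg (n : ℕ) : 0 ≤ cnsFactor n :=
  div_nonneg (Gamma_nonneg_of_nonneg (by positivity)) (by positivity)

lemma cns_eq_cnsFactor_mul_sin (n : ℕ) (s : ℝ) : cns n s = cnsFactor n * sin (π * s) :=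
  mul_div_right_comm _ _ _

lemma cns_nonneg (n : ℕ) {s : ℝ} (hs : s ∈ Icc (0 : ℝ) 1) : 0 ≤ cns n s := by
  rw [cns_eq_cnsFactor_mul_sin]
  exact mul_nonneg (cnsFactor_nonneg n) (sin_pi_mul_nonneg hs)

lemma ofReal_pi_mul_cnsFactor_mul_toSphere_univ {n : ℕ} (hn : 1 ≤ n) :
    ENNReal.ofReal (π * cnsFactor n) *
      (volume : Measure (EuclideanSpace ℝ (Fin n))).toSphere univ = 2 := by
  have hΓ : 0 < Gamma ((n : ℝ) / 2) := Gamma_pos_of_pos (by positivity)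
  have hconst : π * cnsFactor n * (2 * π ^ ((n : ℝ) / 2) / Gamma ((n : ℝ) / 2)) = 2 := by
    rw [cnsFactor, rpow_add pi_pos, rpow_one]
    field_simp [hΓ.ne']
  rw [toSphere_volume_univ_euclideanSpace hn,
    ← ENNReal.ofReal_mul (mul_nonneg pi_pos.le (cnsFactor_nonneg n)), hconst]
  exact ENNReal.ofReal_ofNat 2

variable {n : ℕ} {s σ r : ℝ}

lemma uSigma_eq (y : EuclideanSpace ℝ (Fin n)) :
    uSigma n s σ y = cnsFactor n * uSigmaProfile s σ (1 - ‖y‖ ^ 2) := by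
  have hlt : 0 < 1 - ‖y‖ ^ 2 ↔ ‖y‖ < 1 := by
    rw [sub_pos, sq_lt_one_iff₀ (norm_nonneg y)]
  have hgt : 1 - ‖y‖ ^ 2 < 0 ↔ 1 < ‖y‖ := by
    rw [sub_neg, one_lt_sq_iff₀ (norm_nonneg y)]
  simp only [uSigma, uSigmaProfile, hlt, hgt, cns_eq_cnsFactor_mul_sin, neg_sub, mul_ite, mul_assoc,
    mul_zero]

lemma uSigma_nonneg (hs : s ∈ Icc (0 : ℝ) 1) (hσ : s + σ ∈ Icc (0 : ℝ) 1)
    (y : EuclideanSpace ℝ (Fin n)) : 0 ≤ uSigma n s σ y := by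
  rw [uSigma_eq]
  exact mul_nonneg (cnsFactor_nonneg n) (uSigmaProfile_nonneg hs hσ _)

lemma measurable_uSigma : Measurable (uSigma n s σ) := by
  simp only [funext uSigma_eq]
  exact ((measurable_uSigmaProfile s σ).comp (by fun_prop)).const_mul _

lemma eta_nonneg (hs : s ∈ Icc (0 : ℝ) 1) (hr : 0 ≤ r) (y : EuclideanSpace ℝ (Fin n)) :
    0 ≤ eta n s r y := by
  unfold eta
  split_ifs with hy
  · have hball : 0 ≤ ‖y‖ ^ 2 - r ^ 2 := sub_nonneg.mpr (pow_le_pow_left₀ hr hy.le 2)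
    have hcns := cns_nonneg n hs
    positivity
  · exact le_rfl

lemma measurable_eta : Measurable (eta n s r) :=
  Measurable.ite (measurableSet_lt measurable_const measurable_norm) (by fun_prop) measurable_const

variable {x ω : EuclideanSpace ℝ (Fin n)}

lemma abs_pow_mul_eta_mul_uSigma_of_chord {a b : ℝ} (hn : 1 ≤ n) (hr : 0 ≤ r) (hω : ‖ω‖ = 1)
    {ρ : ℝ} (hchord : 1 - ‖x + ρ • ω‖ ^ 2 = (a - ρ) * (b + ρ)) :
    |ρ| ^ (n - 1) * (eta n s r (ρ • ω) * uSigma n s σ (x + ρ • ω)) =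
      cns n s * cnsFactor n * r ^ (2 * s) * chordDensity s σ r a b ρ := by
  have hnorm : ‖ρ • ω‖ = |ρ| := by rw [norm_smul, hω, mul_one, norm_eq_abs]
  rw [eta, hnorm, chordDensity, uSigma_eq, hchord]
  split_ifs with hρ
  · have hρ₀ : |ρ| ≠ 0 := (hr.trans_lt hρ).ne'
    have hpow : |ρ| ^ (n - 1) = |ρ| ^ n * |ρ|⁻¹ :=
      (eq_mul_inv_iff_mul_eq₀ hρ₀).mpr (pow_sub_one_mul (by omega) _)
    have hball : 0 ≤ ρ ^ 2 - r ^ 2 :=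
      sub_nonneg.mpr (sq_abs ρ ▸ pow_le_pow_left₀ hr hρ.le 2)
    rw [hpow, sq_abs, rpow_neg hball]
    field_simp
  · simp only [zero_mul, mul_zero]

lemma lintegral_line_eta_mul_uSigma (hn : 1 ≤ n) (hs : s ∈ Ico (0 : ℝ) 1)
    (hσ : σ ∈ Ioo (-s) (1 - s)) (hr : 0 < r) (hrx : r + ‖x‖ < 1) (hω : ‖ω‖ = 1) :
    ∫⁻ ρ : ℝ, ENNReal.ofReal (|ρ| ^ (n - 1)) *
      ENNReal.ofReal (eta n s r (ρ • ω) * uSigma n s σ (x + ρ • ω)) =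
    ENNReal.ofReal (π * cnsFactor n) * ENNReal.ofReal (uSigma n s σ x) := by
  obtain ⟨a, b, ha, hb, hab, hchord⟩ := exists_chord_of_add_norm_lt_one hr.le hrx hω
  have hconst : 0 ≤ cns n s * cnsFactor n * r ^ (2 * s) :=
    mul_nonneg (mul_nonneg (cns_nonneg n (Ico_subset_Icc_self hs)) (cnsFactor_nonneg n))
      (rpow_nonneg hr.le _)
  have hcancel : r ^ (2 * s) * r ^ (-(2 * s)) = 1 := by
    rw [← rpow_add hr, add_neg_cancel, rpow_zero]
  calc ∫⁻ ρ : ℝ, ENNReal.ofReal (|ρ| ^ (n - 1)) *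
        ENNReal.ofReal (eta n s r (ρ • ω) * uSigma n s σ (x + ρ • ω))
      = ∫⁻ ρ : ℝ, ENNReal.ofReal (cns n s * cnsFactor n * r ^ (2 * s)) *
          ENNReal.ofReal (chordDensity s σ r a b ρ) := by
        refine lintegral_congr fun ρ ↦ ?_
        rw [← ENNReal.ofReal_mul (by positivity), ← ENNReal.ofReal_mul hconst,
          abs_pow_mul_eta_mul_uSigma_of_chord hn hr.le hω (hchord ρ)]
    _ = ENNReal.ofReal (cns n s * cnsFactor n * r ^ (2 * s) *
          (π * (r ^ (-(2 * s)) * (1 - ‖x‖ ^ 2) ^ (-σ)))) := by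
        rw [lintegral_const_mul' _ _ ENNReal.ofReal_ne_top, lintegral_chordDensity hs hσ hr ha hb,
          hab, ENNReal.ofReal_mul hconst]
    _ = ENNReal.ofReal (π * cnsFactor n) * ENNReal.ofReal (uSigma n s σ x) := by
        rw [← ENNReal.ofReal_mul (mul_nonneg pi_pos.le (cnsFactor_nonneg n)), uSigma,
          if_pos (by linarith)]
        congr 1
        linear_combination (π * cnsFactor n * cns n s * (1 - ‖x‖ ^ 2) ^ (-σ)) * hcancel

lemma lintegral_eta_mul_uSigma (hn : 1 ≤ n) (hs : s ∈ Ico (0 : ℝ) 1) (hσ : σ ∈ Ioo (-s) (1 - s))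
    (hr : 0 < r) (hrx : r + ‖x‖ < 1) :
    ∫⁻ y, ENNReal.ofReal (eta n s r (y - x) * uSigma n s σ y) =
      ENNReal.ofReal (uSigma n s σ x) := by
  have : Nonempty (Fin n) := ⟨⟨0, hn⟩⟩
  have heta : Measurable (eta n s r) := measurable_eta
  have huSigma : Measurable (uSigma n s σ) := measurable_uSigma
  have hshift : ∫⁻ y, ENNReal.ofReal (eta n s r (y - x) * uSigma n s σ y) =
      ∫⁻ y, ENNReal.ofReal (eta n s r y * uSigma n s σ (x + y)) := by
    rw [← lintegral_add_left_eq_self _ x]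
    simp only [add_sub_cancel_left]
  refine (ENNReal.mul_right_inj two_ne_zero ENNReal.ofNat_ne_top).mp ?_
  rw [hshift, two_mul_lintegral_eq_lintegral_toSphere_lines volume (by fun_prop),
    finrank_euclideanSpace_fin]
  have hlines (ω : Metric.sphere (0 : EuclideanSpace ℝ (Fin n)) 1) :=
    lintegral_line_eta_mul_uSigma hn hs hσ hr hrx (norm_eq_of_mem_sphere ω)
  rw [lintegral_congr hlines, lintegral_const, mul_right_comm,
    ofReal_pi_mul_cnsFactor_mul_toSphere_univ hn]

end MeanValue

theorem uSigma_meanValueProperty_general (n : ℕ) (hn : 1 ≤ n) (s σ : ℝ)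
    (hs : s ∈ Set.Ico (0 : ℝ) 1) (hσ : σ ∈ Set.Ioo (-s) (1 - s))
    (x : EuclideanSpace ℝ (Fin n)) (r : ℝ) (hr : 0 < r) (hr1 : r < 1 - ‖x‖) :
    IntegrableOn (fun y ↦ eta n s r (y - x) * uSigma n s σ y) (Metric.ball x r)ᶜ ∧
    uSigma n s σ x = ∫ y in (Metric.ball x r)ᶜ, eta n s r (y - x) * uSigma n s σ y := by
  have hs' := Ico_subset_Icc_self hs
  have hu : ∀ y, 0 ≤ uSigma n s σ y :=
    uSigma_nonneg hs' ⟨by linarith [hσ.1], by linarith [hσ.2]⟩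
  have hnonneg (y) : 0 ≤ eta n s r (y - x) * uSigma n s σ y :=
    mul_nonneg (eta_nonneg hs' hr.le _) (hu y)
  have hmeas : Measurable fun y ↦ eta n s r (y - x) * uSigma n s σ y :=
    (measurable_eta.comp (by fun_prop)).mul measurable_uSigma
  have hlintegral := lintegral_eta_mul_uSigma hn hs hσ hr (lt_sub_iff_add_lt.mp hr1)
  have hintegrable : Integrable fun y ↦ eta n s r (y - x) * uSigma n s σ y := by
    rw [← lintegral_ofReal_ne_top_iff_integrable hmeas.aestronglyMeasurable (ae_of_all _ hnonneg),
      hlintegral]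
    exact ENNReal.ofReal_ne_top
  have hball (y) (hy : y ∉ (Metric.ball x r)ᶜ) : eta n s r (y - x) * uSigma n s σ y = 0 := by
    rw [notMem_compl_iff, mem_ball_iff_norm] at hy
    rw [eta, if_neg hy.not_gt, zero_mul]
  refine ⟨hintegrable.integrableOn, ?_⟩
  rw [setIntegral_eq_integral_of_forall_compl_eq_zero hball, integral_eq_lintegral_of_nonneg_ae
    (ae_of_all _ hnonneg) hmeas.aestronglyMeasurable, hlintegral, ENNReal.toReal_ofReal (hu x)]

/-- `u_σ` satisfies the `s`-mean value property on the open unit ball. -/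
theorem uSigma_meanValueProperty (n : ℕ) (hn : 1 ≤ n) (s σ : ℝ)
    (hs : s ∈ Set.Ioo (0 : ℝ) 1) (hσ : σ ∈ Set.Ioo (0 : ℝ) (1 - s))
    (x : EuclideanSpace ℝ (Fin n)) (hx : ‖x‖ < 1)
    (r : ℝ) (hr : 0 < r) (hr1 : r < 1 - ‖x‖) :
    MeasureTheory.IntegrableOn (fun y => eta n s r (y - x) * uSigma n s σ y)
      (Metric.ball x r)ᶜ ∧
    uSigma n s σ x = ∫ y in (Metric.ball x r)ᶜ, eta n s r (y - x) * uSigma n s σ y :=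
  uSigma_meanValueProperty_general n hn s σ (Ioo_subset_Ico_self hs)
    ⟨(neg_neg_of_pos hs.1).trans hσ.1, hσ.2⟩ x r hr hr1
end

section
/- Maximum principle: let Ω ⊆ ℝⁿ be open and bounded and s ∈ (0,1). Let u : ℝⁿ → ℝ satisfy u ∈ C^{2s+ε}(Ω), u continuous on the closure of Ω, and ∫_{ℝⁿ} |u(y)|/(1+|y|^{n+2s}) dy < ∞. Assume that for every x ∈ Ω the principal value defining (−Δ)^s u(x) exists and (−Δ)^s u(x) ≤ 0, and that u ≤ 0 on ℝⁿ∖Ω. Then u ≤ 0 on Ω. -/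
open MeasureTheory Real Set Filter

/-- The normalizing constant `𝒜(n,s) = s(1−s)·Γ(n/2+s)/(π^{n/2+2s}·Γ(2−s))` of the
fractional Laplacian. -/
noncomputable def ANS (n : ℕ) (s : ℝ) : ℝ :=
  s * (1 - s) * Real.Gamma ((n : ℝ) / 2 + s) /
    (Real.pi ^ ((n : ℝ) / 2 + 2 * s) * Real.Gamma (2 - s))

/-- `FracLapAt n s u x L` says that the principal value defining the fractional Laplacian
`(−Δ)^s u (x)` exists and `(−Δ)^s u (x) = L`. -/
def FracLapAt (n : ℕ) (s : ℝ) (u : EuclideanSpace ℝ (Fin n) → ℝ)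
    (x : EuclideanSpace ℝ (Fin n)) (L : ℝ) : Prop :=
  Filter.Tendsto
    (fun ε : ℝ => ANS n s * ∫ y in {y : EuclideanSpace ℝ (Fin n) | ε < ‖y - x‖},
      (u x - u y) / ‖x - y‖ ^ ((n : ℝ) + 2 * s))
    (nhdsWithin 0 (Set.Ioi 0)) (nhds L)

/-- Hölder regularity of order `β`: `β`-Hölder if `β ≤ 1`, and continuously differentiable
with `(β−1)`-Hölder gradient if `β > 1`. -/
def HolderRegOn (n : ℕ) (β : ℝ) (u : EuclideanSpace ℝ (Fin n) → ℝ)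
    (K : Set (EuclideanSpace ℝ (Fin n))) : Prop :=
  if β ≤ 1 then ∃ C : NNReal, HolderOnWith C β.toNNReal u K
  else ∃ u' : EuclideanSpace ℝ (Fin n) → (EuclideanSpace ℝ (Fin n) →L[ℝ] ℝ),
    (∀ x ∈ K, HasFDerivAt u (u' x) x) ∧ ∃ C : NNReal, HolderOnWith C (β - 1).toNNReal u' K

/-- `u ∈ C^{2s+ε}(Ω)`: for every compact `K ⊆ Ω` there is `α > 0` with `2s+α` not an
integer such that `u` is Hölder regular of order `2s+α` on `K`. -/
def CTwoSPlus (n : ℕ) (s : ℝ) (u : EuclideanSpace ℝ (Fin n) → ℝ)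
    (Ω : Set (EuclideanSpace ℝ (Fin n))) : Prop :=
  ∀ K : Set (EuclideanSpace ℝ (Fin n)), K ⊆ Ω → IsCompact K →
    ∃ α : ℝ, 0 < α ∧ (∀ m : ℤ, (2 * s + α : ℝ) ≠ (m : ℝ)) ∧ HolderRegOn n (2 * s + α) u K

/-!
Suppose that `u` is positive somewhere. It then has a positive global maximum, attained at a point
`x ∈ Ω`. The integrand `(u x - u y) / ‖x - y‖ ^ (n + 2 * s)` is nonnegative, so its principal value
is an honest Lebesgue integral, and this integral can be `≤ 0` only if `u = u x` almost everywhere.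
But `u ≤ 0 < u x` outside the bounded set `Ω`, hence on a set of infinite measure.
-/

open Module
open scoped Topology

section Truncation

variable {ι E : Type*} {l : Filter ι} [NormedAddCommGroup E] [MeasurableSpace E]

theorem aecover_setOf_lt_norm_sub [OpensMeasurableSpace E] (μ : Measure E)
    [NullSingletonClass μ] (x : E) {ε : ι → ℝ} (hε : Tendsto ε l (𝓝 0)) :
    AECover μ l fun i => {y : E | ε i < ‖y - x‖} where
  ae_eventually_mem := by
    filter_upwards [compl_mem_ae_iff.2 (measure_singleton x)] with y hy
    exact hε.eventually_lt_const (norm_sub_pos_iff.2 hy)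
  measurableSet i := (isOpen_lt continuous_const (by fun_prop)).measurableSet

theorem ae_eq_zero_of_tendsto_setIntegral_nonpos {α : Type*} [MeasurableSpace α] {μ : Measure α}
    [l.NeBot] [l.IsCountablyGenerated] {φ : ι → Set α} (hφ : AECover μ l φ) {f : α → ℝ}
    (hf : 0 ≤ f) (hfi : ∀ i, IntegrableOn f (φ i) μ) {L : ℝ} (hL : L ≤ 0)
    (h : Tendsto (fun i => ∫ x in φ i, f x ∂μ) l (𝓝 L)) : f =ᵐ[μ] 0 := by
  have hf_ae : 0 ≤ᵐ[μ] f := .of_forall hf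
  have hint : Integrable f μ := hφ.integrable_of_integral_tendsto_of_nonneg_ae L hfi hf_ae h
  have hval : ∫ x, f x ∂μ = L := hφ.integral_eq_of_tendsto_of_nonneg_ae L hf_ae hfi h
  exact (integral_eq_zero_iff_of_nonneg hf hint).1
    ((hval.trans_le hL).antisymm (integral_nonneg hf))

end Truncation

section Weight

variable {E : Type*} [NormedAddCommGroup E] {p : ℝ}

theorem one_add_rpow_le_two_rpow_mul (hp : 0 ≤ p) {a : ℝ} (ha : 0 ≤ a) :
    (1 + a) ^ p ≤ 2 ^ p * (1 + a ^ p) := by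
  have hmax : max 1 a ^ p ≤ 1 + a ^ p := by
    have : 0 ≤ a ^ p := rpow_nonneg ha p
    rcases max_cases 1 a with ⟨h, -⟩ | ⟨h, -⟩ <;> rw [h]
    · rw [one_rpow]
      linarith
    · linarith
  calc (1 + a) ^ p ≤ (2 * max 1 a) ^ p := by
        gcongr
        linarith [le_max_left 1 a, le_max_right 1 a]
    _ = 2 ^ p * max 1 a ^ p := mul_rpow zero_le_two (by positivity)
    _ ≤ 2 ^ p * (1 + a ^ p) := by gcongr

theorem one_add_norm_rpow_le_mul_norm_sub_rpow (hp : 0 ≤ p) {x y : E} {ε : ℝ} (hε : 0 < ε)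
    (hxy : ε ≤ ‖x - y‖) :
    1 + ‖y‖ ^ p ≤ ((1 / ε) ^ p + (1 + ‖x‖ / ε) ^ p) * ‖x - y‖ ^ p := by
  have hone : 1 ≤ 1 / ε * ‖x - y‖ := by
    rw [one_div_mul_eq_div]
    exact (one_le_div hε).2 hxy
  have hnorm : ‖y‖ ≤ (1 + ‖x‖ / ε) * ‖x - y‖ :=
    calc ‖y‖ ≤ ‖x - y‖ + ‖x‖ * 1 := by linarith [norm_le_norm_add_norm_sub x y]
      _ ≤ ‖x - y‖ + ‖x‖ * (1 / ε * ‖x - y‖) := by gcongr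
      _ = (1 + ‖x‖ / ε) * ‖x - y‖ := by ring
  rw [add_mul, ← mul_rpow (by positivity) (by positivity),
    ← mul_rpow (by positivity) (by positivity)]
  gcongr
  exact one_le_rpow hone hp

variable [MeasurableSpace E] [BorelSpace E] {μ : Measure E}

theorem integrable_inv_one_add_norm_rpow [NormedSpace ℝ E] [FiniteDimensional ℝ E]
    [μ.IsAddHaarMeasure] (hp : finrank ℝ E < p) :
    Integrable (fun y : E => (1 + ‖y‖ ^ p)⁻¹) μ := by
  have hp0 : 0 ≤ p := (Nat.cast_nonneg _).trans hp.le
  refine ((integrable_one_add_norm hp).const_mul (2 ^ p)).mono'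
    (Measurable.aestronglyMeasurable (by fun_prop)) (.of_forall fun y => ?_)
  rw [norm_of_nonneg (by positivity), rpow_neg (by positivity), ← div_eq_mul_inv,
    inv_le_comm₀ (by positivity) (by positivity), inv_div, div_le_iff₀' (by positivity)]
  exact one_add_rpow_le_two_rpow_mul hp0 (norm_nonneg y)

theorem integrableOn_div_norm_sub_rpow (hp : 0 ≤ p) {v : E → ℝ}
    (hv : Integrable (fun y => v y / (1 + ‖y‖ ^ p)) μ) (x : E) {ε : ℝ} (hε : 0 < ε) :
    IntegrableOn (fun y => v y / ‖x - y‖ ^ p) {y | ε < ‖y - x‖} μ := by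
  have hmeas : MeasurableSet {y : E | ε < ‖y - x‖} :=
    (isOpen_lt continuous_const (by fun_prop)).measurableSet
  have hbdd : ∀ᵐ y ∂μ.restrict {y | ε < ‖y - x‖}, ‖(1 + ‖y‖ ^ p) / ‖x - y‖ ^ p‖ ≤
      (1 / ε) ^ p + (1 + ‖x‖ / ε) ^ p := by
    filter_upwards [ae_restrict_mem hmeas] with y (hy : ε < ‖y - x‖)
    rw [norm_sub_rev] at hy
    have hpos : 0 < ‖x - y‖ := hε.trans hy
    rw [norm_of_nonneg (by positivity), div_le_iff₀ (by positivity)]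
    exact one_add_norm_rpow_le_mul_norm_sub_rpow hp hε hy.le
  refine (hv.integrableOn.mul_bdd (Measurable.aestronglyMeasurable (by fun_prop)) hbdd).congr
    (.of_forall fun y => ?_)
  have : 0 < 1 + ‖y‖ ^ p := by positivity
  field_simp

end Weight

section Measurability

variable {α : Type*}

theorem upperSemicontinuous_max_const_of_isClosed {β : Type*} [LinearOrder β] [TopologicalSpace α]
    {F : Set α} (hF : IsClosed F) {f : α → β} (hf : UpperSemicontinuousOn f F) {c : β}
    (hc : ∀ x ∉ F, f x ≤ c) : UpperSemicontinuous fun x => max (f x) c := by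
  intro x b hb
  obtain ⟨hfb, hcb⟩ := max_lt_iff.1 hb
  have hlt : ∀ᶠ y in 𝓝 x, y ∈ F → f y < b := by
    by_cases hx : x ∈ F
    · exact eventually_nhdsWithin_iff.1 (hf x hx b hfb)
    · filter_upwards [hF.isOpen_compl.mem_nhds hx] with y hy hyF using absurd hyF hy
  filter_upwards [hlt] with y hy
  by_cases hyF : y ∈ F
  · exact max_lt (hy hyF) hcb
  · exact max_lt ((hc y hyF).trans_lt hcb) hcb

/-- Integrability of `|u| / w` does not make `u` measurable; the identity `u = 2 u⁺ - |u|` reduces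
this to the measurability of the positive part. -/
theorem integrable_div_of_integrable_abs_div [MeasurableSpace α] {μ : Measure α} {u w : α → ℝ}
    (hu : AEStronglyMeasurable (fun y => max (u y) 0) μ) (hw : AEStronglyMeasurable w μ)
    (h : Integrable (fun y => |u y| / w y) μ) : Integrable (fun y => u y / w y) μ := by
  have hdecomp (y : α) : 2 * (max (u y) 0 / w y) - |u y| / w y = u y / w y := by
    rcases le_total 0 (u y) with hy | hy
    · rw [max_eq_left hy, abs_of_nonneg hy]
      ring
    · rw [max_eq_right hy, abs_of_nonpos hy]
      ring
  refine h.mono ?_ (.of_forall fun y => by simp)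
  exact (((hu.div₀ hw).const_mul 2).sub h.aestronglyMeasurable).congr (.of_forall hdecomp)

end Measurability

theorem ANS_pos (n : ℕ) {s : ℝ} (hs : s ∈ Ioo (0 : ℝ) 1) : 0 < ANS n s := by
  obtain ⟨hs0, hs1⟩ := hs
  have hs1' : 0 < 1 - s := sub_pos.2 hs1
  have hnum : 0 < Gamma ((n : ℝ) / 2 + s) := Gamma_pos_of_pos (by positivity)
  have hden : 0 < Gamma (2 - s) := Gamma_pos_of_pos (by linarith)
  exact div_pos (mul_pos (mul_pos hs0 hs1') hnum) (mul_pos (rpow_pos_of_pos pi_pos _) hden)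

theorem FracLapAt.ae_eq_of_nonpos_of_forall_le {n : ℕ} [NeZero n] {s : ℝ}
    (hs : s ∈ Ioo (0 : ℝ) 1) {u : EuclideanSpace ℝ (Fin n) → ℝ}
    (hu : Integrable fun y => u y / (1 + ‖y‖ ^ ((n : ℝ) + 2 * s)))
    {x : EuclideanSpace ℝ (Fin n)} {L : ℝ} (h : FracLapAt n s u x L) (hL : L ≤ 0)
    (hmax : ∀ y, u y ≤ u x) : ∀ᵐ y, u y = u x := by
  have hdim : (finrank ℝ (EuclideanSpace ℝ (Fin n)) : ℝ) < n + 2 * s := by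
    rw [finrank_euclideanSpace_fin]
    linarith [hs.1]
  have hp : 0 < (n : ℝ) + 2 * s := (Nat.cast_nonneg _).trans_lt hdim
  have hdiff : Integrable fun y => (u x - u y) / (1 + ‖y‖ ^ ((n : ℝ) + 2 * s)) := by
    simp only [sub_div, div_eq_mul_inv (u x)]
    exact ((integrable_inv_one_add_norm_rpow hdim).const_mul (u x)).sub hu
  obtain ⟨ε, -, hε_pos, hε_lim⟩ := exists_seq_strictAnti_tendsto (0 : ℝ)
  have hlim := h.comp (tendsto_nhdsWithin_iff.2 ⟨hε_lim, .of_forall hε_pos⟩)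
  simp only [Function.comp_def, ← integral_const_mul] at hlim
  have hzero := ae_eq_zero_of_tendsto_setIntegral_nonpos
    (aecover_setOf_lt_norm_sub volume x hε_lim)
    (fun y => mul_nonneg (ANS_pos n hs).le (div_nonneg (sub_nonneg.2 (hmax y)) (by positivity)))
    (fun k => (integrableOn_div_norm_sub_rpow hp.le hdiff x (hε_pos k)).const_mul _) hL hlim
  filter_upwards [hzero] with y hy
  rcases div_eq_zero_iff.1 ((mul_eq_zero_iff_left (ANS_pos n hs).ne').1 hy) with hnum | hden
  · exact (sub_eq_zero.1 hnum).symm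
  · rw [rpow_eq_zero (norm_nonneg _) hp.ne', norm_sub_eq_zero_iff] at hden
    rw [hden]

theorem exists_pos_forall_le_of_upperSemicontinuousOn_closure {X : Type*} [PseudoMetricSpace X]
    [ProperSpace X] {Ω : Set X} (hΩ : Bornology.IsBounded Ω) {u : X → ℝ}
    (hu : UpperSemicontinuousOn u (closure Ω)) (hout : ∀ x ∉ Ω, u x ≤ 0) {x₀ : X}
    (hx₀ : 0 < u x₀) : ∃ x ∈ Ω, 0 < u x ∧ ∀ y, u y ≤ u x := by
  have hpos_mem {x : X} (hx : 0 < u x) : x ∈ Ω := not_imp_comm.1 (hout x) hx.not_ge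
  obtain ⟨x, -, hx⟩ := hu.exists_isMaxOn ⟨x₀, subset_closure (hpos_mem hx₀)⟩
    hΩ.isCompact_closure
  have hux : 0 < u x := hx₀.trans_le (hx (subset_closure (hpos_mem hx₀)))
  refine ⟨x, hpos_mem hux, hux, fun y => ?_⟩
  by_cases hy : y ∈ Ω
  · exact hx (subset_closure hy)
  · exact (hout y hy).trans hux.le

theorem not_ae_mem_of_isBounded {E : Type*} [NormedAddCommGroup E] [NormedSpace ℝ E]
    [FiniteDimensional ℝ E] [Nontrivial E] [MeasurableSpace E] [BorelSpace E] (μ : Measure E)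
    [μ.IsAddHaarMeasure] {Ω : Set E} (hΩ : Bornology.IsBounded Ω) : ¬ ∀ᵐ y ∂μ, y ∈ Ω := by
  intro h
  have : NoncompactSpace E := NormedSpace.noncompactSpace ℝ E
  have hfin : μ Ω < ⊤ := hΩ.measure_lt_top
  have hΩ_univ : Ω =ᵐ[μ] univ := eventuallyEq_univ.2 h
  rw [measure_congr hΩ_univ, measure_univ_of_isAddLeftInvariant] at hfin
  exact hfin.false

theorem fracLap_maximum_principle_general (n : ℕ) (hn : 1 ≤ n) (s : ℝ) (hs : s ∈ Ioo (0 : ℝ) 1)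
    (Ω : Set (EuclideanSpace ℝ (Fin n))) (hΩb : Bornology.IsBounded Ω)
    (u : EuclideanSpace ℝ (Fin n) → ℝ) (hucont : UpperSemicontinuousOn u (closure Ω))
    (huint : Integrable
      (fun y : EuclideanSpace ℝ (Fin n) => |u y| / (1 + ‖y‖ ^ ((n : ℝ) + 2 * s))))
    (hsub : ∀ x ∈ Ω, ∃ L : ℝ, FracLapAt n s u x L ∧ L ≤ 0) (hout : ∀ x ∉ Ω, u x ≤ 0) :
    ∀ x ∈ Ω, u x ≤ 0 := by
  intro x₀ _
  by_contra! hx₀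
  have : NeZero n := ⟨by lia⟩
  obtain ⟨x, hxΩ, hux, hmax⟩ :=
    exists_pos_forall_le_of_upperSemicontinuousOn_closure hΩb hucont hout hx₀
  obtain ⟨L, hL, hL0⟩ := hsub x hxΩ
  have hpos : Measurable fun y => max (u y) 0 :=
    (upperSemicontinuous_max_const_of_isClosed isClosed_closure hucont
      fun y hy => hout y (mt (subset_closure ·) hy)).measurable
  have hint : Integrable fun y => u y / (1 + ‖y‖ ^ ((n : ℝ) + 2 * s)) :=
    integrable_div_of_integrable_abs_div hpos.aestronglyMeasurable
      (Measurable.aestronglyMeasurable (by fun_prop)) huint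
  have hconst : ∀ᵐ y, u y = u x := hL.ae_eq_of_nonpos_of_forall_le hs hint hL0 hmax
  refine not_ae_mem_of_isBounded volume hΩb (hconst.mono fun y hy => ?_)
  by_contra hyΩ
  exact (hout y hyΩ).not_gt (hy ▸ hux)

/-- Maximum principle: if `(−Δ)^s u ≤ 0` in `Ω` and `u ≤ 0` outside `Ω`, then `u ≤ 0`
in `Ω`. -/
theorem fracLap_maximum_principle (n : ℕ) (hn : 1 ≤ n) (s : ℝ)
    (hs : s ∈ Set.Ioo (0 : ℝ) 1)
    (Ω : Set (EuclideanSpace ℝ (Fin n))) (hΩo : IsOpen Ω) (hΩb : Bornology.IsBounded Ω)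
    (u : EuclideanSpace ℝ (Fin n) → ℝ)
    (hureg : CTwoSPlus n s u Ω) (hucont : ContinuousOn u (closure Ω))
    (huint : MeasureTheory.Integrable
      (fun y : EuclideanSpace ℝ (Fin n) => |u y| / (1 + ‖y‖ ^ ((n : ℝ) + 2 * s))))
    (hsub : ∀ x ∈ Ω, ∃ L : ℝ, FracLapAt n s u x L ∧ L ≤ 0)
    (hout : ∀ x ∉ Ω, u x ≤ 0) :
    ∀ x ∈ Ω, u x ≤ 0 :=
  fracLap_maximum_principle_general n hn s hs Ω hΩb u hucont.upperSemicontinuousOn huint hsub hout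
end

section
/- Liouville theorem for s-harmonic functions: let n ≥ 1 and s ∈ (0,1). If u : ℝⁿ → ℝ is a bounded continuous function satisfying the s-mean value property on all of ℝⁿ (i.e. u(x) = ∫_{ℝⁿ∖B_r(x)} η_r^{(s)}(y−x)·u(y) dy for every x ∈ ℝⁿ and every r > 0), then u is constant. -/
open MeasureTheory Real Set

/-!
The kernel `η_r` is the `L¹`-normalized dilation of the integrable function `η_1`. Substituting
`y = r • w`, the mean value property reads `u x = ∫ η_1 (w - x / r) * u (r • w) dw`, so
`|u x - u 0|` is at most `sup |u|` times the `L¹`-distance between `η_1` and its translate by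
`x / r`. As `r → ∞` this tends to `0`, because translation is continuous in `L¹`.
-/

open Filter Module Topology

theorem tendsto_integral_norm_translate_sub {G F : Type*} [AddGroup G] [TopologicalSpace G]
    [IsTopologicalAddGroup G] [MeasurableSpace G] [BorelSpace G] [NormedAddCommGroup F]
    {μ : Measure G} [IsLocallyFiniteMeasure μ] [μ.InnerRegularCompactLTTop]
    [μ.IsAddLeftInvariant] {f : G → F} (hf : Integrable f μ) :
    Tendsto (fun a ↦ ∫ x, ‖f (a + x) - f x‖ ∂μ) (𝓝 0) (𝓝 0) := by
  have hf₁ : MemLp f 1 μ := memLp_one_iff_integrable.2 hf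
  have norm_vadd_sub (a : G) :
      ‖(DomAddAct.mk a +ᵥ hf₁.toLp f : Lp F 1 μ) - hf₁.toLp f‖ = ∫ x, ‖f (a + x) - f x‖ ∂μ := by
    rw [DomAddAct.mk_vadd_toLp, ← MemLp.toLp_sub, L1.norm_eq_integral_norm]
    refine integral_congr_ae ?_
    filter_upwards [MemLp.coeFn_toLp
      ((hf₁.comp_measurePreserving (measurePreserving_vadd a μ)).sub hf₁)] with x hx
    exact congrArg norm hx
  have : Fact ((1 : ENNReal) ≠ ⊤) := ⟨ENNReal.one_ne_top⟩
  have continuous_norm_vadd_sub : Continuous fun a : G ↦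
      ‖(DomAddAct.mk a +ᵥ hf₁.toLp f : Lp F 1 μ) - hf₁.toLp f‖ :=
    ((DomAddAct.continuous_mk.vadd continuous_const).sub continuous_const).norm
  simpa [norm_vadd_sub] using continuous_norm_vadd_sub.tendsto 0

theorem norm_integral_smul_sub_integral_smul_le {α F : Type*} [MeasurableSpace α]
    [NormedAddCommGroup F] [NormedSpace ℝ F] {μ : Measure α} {K L : α → ℝ} {g : α → F} {M : ℝ}
    (hK : Integrable K μ) (hL : Integrable L μ) (hg : AEStronglyMeasurable g μ)
    (hM : ∀ᵐ x ∂μ, ‖g x‖ ≤ M) :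
    ‖∫ x, K x • g x ∂μ - ∫ x, L x • g x ∂μ‖ ≤ M * ∫ x, ‖K x - L x‖ ∂μ := by
  have hKg : Integrable (fun x ↦ K x • g x) μ := hK.smul_bdd M hg hM
  have hLg : Integrable (fun x ↦ L x • g x) μ := hL.smul_bdd M hg hM
  rw [← integral_sub hKg hLg, ← integral_const_mul]
  refine norm_integral_le_of_norm_le ((hK.sub hL).norm.const_mul M) ?_
  filter_upwards [hM] with x hx
  rw [← sub_smul, norm_smul, mul_comm]
  gcongr

section Dilation

variable {E : Type*} [NormedAddCommGroup E] [NormedSpace ℝ E]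

/-- The `L¹`-normalized dilation `y ↦ r⁻ⁿ * K (y / r)` of a kernel `K` on a space of dimension
`n`. -/
noncomputable def dilate (r : ℝ) (K : E → ℝ) (y : E) : ℝ :=
  (r ^ finrank ℝ E)⁻¹ * K (r⁻¹ • y)

variable {F : Type*} [NormedAddCommGroup F] [NormedSpace ℝ F] [FiniteDimensional ℝ E]
  [MeasurableSpace E] [BorelSpace E] {μ : Measure E} [μ.IsAddHaarMeasure]

theorem integral_dilate_sub_smul {r : ℝ} (hr : 0 < r) (K : E → ℝ) (u : E → F) (x : E) :
    ∫ y, dilate r K (y - x) • u y ∂μ = ∫ w, K (-(r⁻¹ • x) + w) • u (r • w) ∂μ := by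
  have smul_sub_eq (w : E) : r⁻¹ • (r • w - x) = -(r⁻¹ • x) + w := by
    rw [smul_sub, inv_smul_smul₀ hr.ne', sub_eq_neg_add]
  calc ∫ y, dilate r K (y - x) • u y ∂μ
      = (r ^ finrank ℝ E)⁻¹ • ∫ y, K (r⁻¹ • (y - x)) • u y ∂μ := by
        simp only [dilate, mul_smul, integral_smul]
    _ = ∫ w, K (r⁻¹ • (r • w - x)) • u (r • w) ∂μ :=
        (Measure.integral_comp_smul_of_nonneg μ (fun y ↦ K (r⁻¹ • (y - x)) • u y) r
          (hR := hr.le)).symm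
    _ = ∫ w, K (-(r⁻¹ • x) + w) • u (r • w) ∂μ := by simp only [smul_sub_eq]

theorem tendsto_integral_dilate_sub_smul_sub {K : E → ℝ} {u : E → F} {M : ℝ}
    (hK : Integrable K μ) (hu : AEStronglyMeasurable u μ) (hM : ∀ x, ‖u x‖ ≤ M) (x : E) :
    Tendsto (fun r ↦ ∫ y, dilate r K (y - x) • u y ∂μ - ∫ y, dilate r K (y - 0) • u y ∂μ)
      atTop (𝓝 0) := by
  have tendsto_shift : Tendsto (fun r : ℝ ↦ -(r⁻¹ • x)) atTop (𝓝 0) := by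
    simpa using ((tendsto_inv_atTop_zero (𝕜 := ℝ)).smul_const x).neg
  have tendsto_bound : Tendsto (fun r : ℝ ↦ M * ∫ w, ‖K (-(r⁻¹ • x) + w) - K w‖ ∂μ)
      atTop (𝓝 0) := by
    simpa using ((tendsto_integral_norm_translate_sub hK).comp tendsto_shift).const_mul M
  refine squeeze_zero_norm' ?_ tendsto_bound
  filter_upwards [eventually_gt_atTop 0] with r hr
  have hu_smul : AEStronglyMeasurable (fun w ↦ u (r • w)) μ :=
    hu.comp_quasiMeasurePreserving (Measure.quasiMeasurePreserving_smul μ hr.ne')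
  simpa only [integral_dilate_sub_smul hr, smul_zero, neg_zero, zero_add] using
    norm_integral_smul_sub_integral_smul_le (hK.comp_add_left _) hK hu_smul
      (Eventually.of_forall fun w ↦ hM (r • w))

theorem exists_forall_eq_of_frequently_eq_integral_dilate {K : E → ℝ} {u : E → F}
    (hK : Integrable K μ) (hbdd : ∃ M, ∀ x, ‖u x‖ ≤ M) (hu : AEStronglyMeasurable u μ)
    (hmv : ∃ᶠ r in atTop, ∀ x, u x = ∫ y, dilate r K (y - x) • u y ∂μ) :
    ∃ a, ∀ x, u x = a := by
  obtain ⟨M, hM⟩ := hbdd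
  refine ⟨u 0, fun x ↦ sub_eq_zero.1 ?_⟩
  refine tendsto_nhds_unique_of_frequently_eq tendsto_const_nhds
    (tendsto_integral_dilate_sub_smul_sub hK hu hM x) (hmv.mono fun r hr ↦ ?_)
  rw [← hr x, ← hr 0]

end Dilation

theorem integrableOn_Ioi_inv_mul_sq_sub_one_rpow_neg {s : ℝ} (hs : s ∈ Ioo 0 1) :
    IntegrableOn (fun t : ℝ ↦ t⁻¹ * (t ^ 2 - 1) ^ (-s)) (Ioi 1) := by
  -- With `t = v + 1` the integrand is `v ^ (-s) * g v`, so its integral is the Mellin transform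
  -- of `g` at `1 - s`.
  let g : ℝ → ℝ := fun v ↦ (v + 1)⁻¹ * (v + 2) ^ (-s)
  have g_nonneg {v : ℝ} (hv : 0 < v) : 0 ≤ g v := by positivity
  have locallyIntegrableOn_g : LocallyIntegrableOn g (Ioi 0) := by
    have continuousOn_g : ContinuousOn g (Ioi 0) :=
      .mul (.inv₀ (by fun_prop) fun v (hv : 0 < v) ↦ by positivity)
        (.rpow_const (by fun_prop) fun v (hv : 0 < v) ↦ .inl (by positivity))
    exact continuousOn_g.locallyIntegrableOn measurableSet_Ioi
  have g_isBigO_atTop : g =O[atTop] (· ^ (-(1 + s))) := by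
    refine .of_bound' ?_
    filter_upwards [eventually_gt_atTop 0] with v hv
    rw [norm_of_nonneg (g_nonneg hv), norm_of_nonneg (by positivity), neg_add, rpow_add hv,
      rpow_neg_one]
    exact mul_le_mul (by gcongr; linarith)
      (rpow_le_rpow_of_nonpos hv (by linarith) (by linarith [hs.1])) (by positivity) (by positivity)
  have g_isBigO_zero : g =O[𝓝[>] 0] (· ^ (-(0 : ℝ))) := by
    refine .of_bound' ?_
    filter_upwards [self_mem_nhdsWithin] with v (hv : 0 < v)
    rw [norm_of_nonneg (g_nonneg hv), neg_zero, rpow_zero, norm_one]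
    exact mul_le_one₀ (inv_le_one_of_one_le₀ (by linarith)) (by positivity)
      (rpow_le_one_of_one_le_of_nonpos (by linarith) (by linarith [hs.1]))
  have integrableOn_shifted : IntegrableOn (fun v ↦ v ^ (1 - s - 1) * g v) (Ioi 0) :=
    mellin_convergent_of_isBigO_scalar locallyIntegrableOn_g g_isBigO_atTop (by linarith [hs.1])
      g_isBigO_zero (by linarith [hs.2])
  rw [← (measurePreserving_add_right volume 1).integrableOn_comp_preimage
    (Homeomorph.addRight 1).measurableEmbedding, preimage_add_const_Ioi, sub_self]
  refine integrableOn_shifted.congr_fun (fun v hv ↦ ?_) measurableSet_Ioi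
  have hv : 0 < v := hv
  rw [Function.comp_apply, show (v + 1) ^ 2 - 1 = v * (v + 2) by ring,
    mul_rpow hv.le (by positivity), show 1 - s - 1 = -s by ring]
  exact mul_left_comm _ _ _

section Eta

variable {n : ℕ} {s r : ℝ}

theorem integrable_eta_one (hn : 1 ≤ n) (hs : s ∈ Ioo 0 1) :
    Integrable (eta n s 1) := by
  have : Nonempty (Fin n) := ⟨⟨0, hn⟩⟩
  let profile : ℝ → ℝ := (Ioi 1).indicator fun t ↦ cns n s / (t ^ n * (t ^ 2 - 1) ^ s)
  have eta_eq : eta n s 1 = fun y ↦ profile ‖y‖ := by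
    ext y
    simp [eta, profile, indicator_apply]
  rw [eta_eq, integrable_fun_norm_addHaar, finrank_euclideanSpace_fin]
  have radial_eq : (fun t ↦ t ^ (n - 1) • profile t) =
      (Ioi 1).indicator fun t ↦ cns n s * (t⁻¹ * (t ^ 2 - 1) ^ (-s)) := by
    ext t
    by_cases ht : t ∈ Ioi 1
    · have ht₀ : 0 < t := zero_lt_one.trans ht
      have ht₁ : 0 ≤ t ^ 2 - 1 := sub_nonneg.2 (one_le_pow₀ ht.le)
      rw [indicator_of_mem ht, smul_eq_mul, show profile t = _ from indicator_of_mem ht _,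
        rpow_neg ht₁, ← Nat.sub_add_cancel hn, pow_succ, Nat.add_sub_cancel]
      field_simp
    · simp [profile, ht]
  rw [radial_eq]
  exact (IntegrableOn.integrable_indicator
    ((integrableOn_Ioi_inv_mul_sq_sub_one_rpow_neg hs).const_mul _) measurableSet_Ioi).integrableOn

theorem dilate_eta_one (hr : 0 < r) : dilate r (eta n s 1) = eta n s r := by
  ext y
  have one_lt_iff : 1 < r⁻¹ * ‖y‖ ↔ r < ‖y‖ := by rw [lt_inv_mul_iff₀ hr, mul_one]
  simp only [dilate, eta, norm_smul, norm_inv, norm_of_nonneg hr.le, finrank_euclideanSpace_fin,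
    one_lt_iff]
  split_ifs with hy
  · have hy₂ : 0 ≤ ‖y‖ ^ 2 - r ^ 2 := sub_nonneg.2 (by gcongr)
    have hr₂ : (r ^ 2) ^ s = r ^ (2 * s) := by rw [rpow_mul hr.le, rpow_two]
    have rescale : (r⁻¹ * ‖y‖) ^ 2 - 1 ^ 2 = (‖y‖ ^ 2 - r ^ 2) / r ^ 2 := by field_simp
    rw [rescale, div_rpow hy₂ (by positivity), hr₂, one_rpow, mul_pow, inv_pow]
    field_simp
  · exact mul_zero _

theorem setIntegral_compl_ball_eta_sub_smul {F : Type*} [NormedAddCommGroup F] [NormedSpace ℝ F]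
    (u : EuclideanSpace ℝ (Fin n) → F) (x : EuclideanSpace ℝ (Fin n)) :
    ∫ y in (Metric.ball x r)ᶜ, eta n s r (y - x) • u y = ∫ y, eta n s r (y - x) • u y := by
  refine setIntegral_eq_integral_of_forall_compl_eq_zero fun y hy ↦ ?_
  rw [notMem_compl_iff, mem_ball_iff_norm] at hy
  rw [eta, if_neg hy.not_gt, zero_smul]

end Eta

theorem liouville_sharmonic_general {F : Type*} [NormedAddCommGroup F] [NormedSpace ℝ F]
    [CompleteSpace F] (n : ℕ) (hn : 1 ≤ n) (s : ℝ) (hs : s ∈ Ioo (0 : ℝ) 1)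
    (u : EuclideanSpace ℝ (Fin n) → F)
    (hbdd : ∃ M : ℝ, ∀ x, ‖u x‖ ≤ M) (hu : AEStronglyMeasurable u)
    (hmv : ∃ᶠ r in atTop, ∀ x : EuclideanSpace ℝ (Fin n),
      u x = ∫ y in (Metric.ball x r)ᶜ, eta n s r (y - x) • u y) :
    ∃ a : F, ∀ x, u x = a := by
  refine exists_forall_eq_of_frequently_eq_integral_dilate (integrable_eta_one hn hs) hbdd hu ?_
  refine (hmv.and_eventually (eventually_gt_atTop 0)).mono fun r ⟨hr_mv, hr⟩ x ↦ ?_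
  rw [dilate_eta_one hr, ← setIntegral_compl_ball_eta_sub_smul, ← hr_mv x]

/-- Liouville theorem: a bounded continuous function satisfying the `s`-mean value property
on all of `ℝⁿ` is constant. -/
theorem liouville_sharmonic (n : ℕ) (hn : 1 ≤ n) (s : ℝ) (hs : s ∈ Set.Ioo (0 : ℝ) 1)
    (u : EuclideanSpace ℝ (Fin n) → ℝ)
    (hbdd : ∃ M : ℝ, ∀ x, |u x| ≤ M) (hcont : Continuous u)
    (hmv : ∀ x : EuclideanSpace ℝ (Fin n), ∀ r : ℝ, 0 < r →
      u x = ∫ y in (Metric.ball x r)ᶜ, eta n s r (y - x) * u y) :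
    ∃ a : ℝ, ∀ x, u x = a := by
  refine liouville_sharmonic_general n hn s hs u hbdd hcont.aestronglyMeasurable ?_
  exact ((eventually_gt_atTop 0).mono fun r hr x ↦ hmv x r hr).frequently
end

section
/- Boundary behaviour of the Green potential of a boundary-blowing right-hand side on the unit ball: let n ≥ 2, s ∈ (0,1) and 0 < β < 1+s. For x ∈ B set δ(x) = 1−|x| and define U(x) = ∫_B (min{|x−y|², δ(x)·δ(y)})^s·|x−y|^{−n}·δ(y)^{−β} dy. Then there exist constants 0 < c ≤ C and ε₀ ∈ (0,1) such that for every x ∈ B with δ(x) < ε₀: if 0 < β < s then c·δ(x)^s ≤ U(x) ≤ C·δ(x)^s; if β = s then c·δ(x)^s·log(1/δ(x)) ≤ U(x) ≤ C·δ(x)^s·log(1/δ(x)); and if s < β < 1+s then c·δ(x)^{2s−β} ≤ U(x) ≤ C·δ(x)^{2s−β}. -/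
/-!
Write `δ = 1 - ‖x‖`. In polar coordinates about `x`, `‖x - y‖ ^ (-n) dy` becomes `dr / r`, which
leads to `U x ≍ δ ^ s * ∫ r in δ..1, r ^ (s - β - 1)`. The three regimes are those of this integral
as `δ → 0`.

For the upper bound, on the ball of radius `δ / 2` about `x` the weight is comparable to `δ ^ (-β)`
and the kernel is at most `‖x - y‖ ^ (2 * s - n)`. Outside it the integrand is at most
`δ ^ s * (1 - ‖y‖) ^ (s - β) * ‖x - y‖ ^ (-n)`. Since `t ^ (-n) ≍ ∫ R in t..2t, R ^ (-n - 1)`, its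
integral is controlled by the `(1 - ‖y‖) ^ (s - β)`-mass of the balls `B(x, R)` with `R ≥ δ / 2`.
Such a ball meets the unit ball in a layer of depth `O(R)` over a cap of radius `O(R)` of the
sphere, so this mass is `O(R ^ (n + s - β))`, as `s - β > -1`.

For the lower bound, one integrates over a cone with apex `x` around the inward direction, where
`1 - ‖y‖` is comparable to `‖x - y‖`.
-/

open MeasureTheory Real Set

/-- The Green-potential comparison integral
`U(x) = ∫_B (min{|x−y|², δ(x)δ(y)})^s · |x−y|^{−n} · δ(y)^{−β} dy` on the unit ball,
where `δ(x) = 1 − |x|`. -/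
noncomputable def greenPotential (n : ℕ) (s β : ℝ) (x : EuclideanSpace ℝ (Fin n)) : ℝ :=
  ∫ y in Metric.ball (0 : EuclideanSpace ℝ (Fin n)) 1,
    (min (‖x - y‖ ^ 2) ((1 - ‖x‖) * (1 - ‖y‖))) ^ s / ‖x - y‖ ^ n * (1 - ‖y‖) ^ (-β)

open Metric Measure
open Module (finrank)
open scoped ENNReal

theorem rpow_le_two_rpow_abs_mul_rpow {a t : ℝ} (ha : 0 < a) (hta : t ≤ 2 * a) (hat : a ≤ 2 * t)
    (p : ℝ) : t ^ p ≤ 2 ^ |p| * a ^ p := by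
  rcases le_total 0 p with hp | hp
  · calc t ^ p ≤ (2 * a) ^ p := rpow_le_rpow (by linarith) hta hp
      _ = 2 ^ |p| * a ^ p := by rw [mul_rpow zero_le_two ha.le, abs_of_nonneg hp]
  · calc t ^ p ≤ (2⁻¹ * a) ^ p := rpow_le_rpow_of_nonpos (by positivity) (by linarith) hp
      _ = 2 ^ |p| * a ^ p := by
        rw [mul_rpow (by positivity) ha.le, abs_of_nonpos hp, inv_rpow zero_le_two,
          rpow_neg zero_le_two]

section RadialIntegrals

theorem lintegral_Ioc_rpow {a b : ℝ} (ha : 0 < a) (hab : a ≤ b) (p : ℝ) :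
    ∫⁻ r in Ioc a b, ENNReal.ofReal (r ^ p) = ENNReal.ofReal (∫ r in a..b, r ^ p) := by
  rw [intervalIntegral.integral_of_le hab, ofReal_integral_eq_lintegral_ofReal]
  · exact (intervalIntegral.intervalIntegrable_rpow
      (.inr (notMem_uIcc_of_lt ha (ha.trans_le hab)))).1
  · filter_upwards [ae_restrict_mem measurableSet_Ioc] with r hr
    exact rpow_nonneg (ha.trans hr.1).le p

theorem lintegral_Ioc_zero_rpow {b p : ℝ} (hb : 0 ≤ b) (hp : -1 < p) :
    ∫⁻ r in Ioc 0 b, ENNReal.ofReal (r ^ p) = ENNReal.ofReal (b ^ (p + 1) / (p + 1)) := by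
  rw [← ofReal_integral_eq_lintegral_ofReal (intervalIntegral.intervalIntegrable_rpow' hp).1,
    ← intervalIntegral.integral_of_le hb, integral_rpow (.inl hp),
    zero_rpow (by linarith), sub_zero]
  filter_upwards [ae_restrict_mem measurableSet_Ioc] with r hr
  exact rpow_nonneg hr.1.le p

theorem ofReal_rpow_add_one_le_lintegral_Ioc {ρ : ℝ} (hρ : 0 < ρ) (q : ℝ) :
    ENNReal.ofReal (ρ ^ (q + 1)) ≤
      ENNReal.ofReal (2 ^ |q|) * ∫⁻ r in Ioc ρ (2 * ρ), ENNReal.ofReal (r ^ q) := by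
  calc ENNReal.ofReal (ρ ^ (q + 1)) = ∫⁻ _ in Ioc ρ (2 * ρ), ENNReal.ofReal (ρ ^ q) := by
        rw [setLIntegral_const, Real.volume_Ioc, ← ENNReal.ofReal_mul (by positivity),
          rpow_add_one hρ.ne', two_mul, add_sub_cancel_right]
    _ ≤ ∫⁻ r in Ioc ρ (2 * ρ), ENNReal.ofReal (2 ^ |q|) * ENNReal.ofReal (r ^ q) := by
        refine setLIntegral_mono' measurableSet_Ioc fun r ⟨hρr, hr⟩ ↦ ?_
        rw [← ENNReal.ofReal_mul (by positivity)]
        exact ENNReal.ofReal_le_ofReal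
          (rpow_le_two_rpow_abs_mul_rpow (hρ.trans hρr) (by linarith) hr q)
    _ = _ := lintegral_const_mul' _ _ ENNReal.ofReal_ne_top

theorem setLIntegral_mul_dist_rpow_le {X : Type*} [PseudoMetricSpace X] [MeasurableSpace X]
    [OpensMeasurableSpace X] (μ : Measure X) [SFinite μ] {F : Set X} {w : X → ℝ≥0∞}
    (hF : MeasurableSet F) (hw : Measurable w) {x : X} {a b : ℝ} (ha : 0 < a)
    (hFab : ∀ y ∈ F, dist x y ∈ Icc a b) (q : ℝ) :
    ∫⁻ y in F, w y * ENNReal.ofReal (dist x y ^ (q + 1)) ∂μ ≤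
      ENNReal.ofReal (2 ^ |q|) * ∫⁻ R in Ioc a (2 * b),
        ENNReal.ofReal (R ^ q) * ∫⁻ y in F ∩ closedBall x R, w y ∂μ := by
  have hmeas : Measurable fun p : X × ℝ ↦
      ENNReal.ofReal (p.2 ^ q) * (closedBall x p.2).indicator w p.1 :=
    (by fun_prop : Measurable fun p : X × ℝ ↦ ENNReal.ofReal (p.2 ^ q)).mul <|
      (hw.comp measurable_fst).indicator (s := {p : X × ℝ | dist p.1 x ≤ p.2})
        (measurableSet_le (by fun_prop) measurable_snd)
  calc ∫⁻ y in F, w y * ENNReal.ofReal (dist x y ^ (q + 1)) ∂μ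
    _ ≤ ∫⁻ y in F, ENNReal.ofReal (2 ^ |q|) * (∫⁻ R in Ioc a (2 * b),
        ENNReal.ofReal (R ^ q) * (closedBall x R).indicator w y) ∂μ := by
        refine setLIntegral_mono' hF fun y hy ↦ ?_
        obtain ⟨hay, hyb⟩ := hFab y hy
        calc w y * ENNReal.ofReal (dist x y ^ (q + 1))
          _ ≤ w y * (ENNReal.ofReal (2 ^ |q|) *
              ∫⁻ R in Ioc (dist x y) (2 * dist x y), ENNReal.ofReal (R ^ q)) := by
              gcongr
              exact ofReal_rpow_add_one_le_lintegral_Ioc (ha.trans_le hay) q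
          _ = ENNReal.ofReal (2 ^ |q|) * ∫⁻ R in Ioc (dist x y) (2 * dist x y),
              ENNReal.ofReal (R ^ q) * (closedBall x R).indicator w y := by
              rw [mul_left_comm, mul_comm (w y), ← lintegral_mul_const _ (by fun_prop)]
              congr 1
              refine setLIntegral_congr_fun measurableSet_Ioc fun R hR ↦ ?_
              simp only [indicator_of_mem (mem_closedBall'.2 hR.1.le)]
          _ ≤ _ := by
              gcongr
    _ = ENNReal.ofReal (2 ^ |q|) * ∫⁻ R in Ioc a (2 * b), ∫⁻ y in F,
        ENNReal.ofReal (R ^ q) * (closedBall x R).indicator w y ∂μ := by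
        rw [lintegral_const_mul' _ _ ENNReal.ofReal_ne_top,
          lintegral_lintegral_swap hmeas.aemeasurable]
    _ = _ := by
        congr 1
        refine lintegral_congr fun R ↦ ?_
        rw [lintegral_const_mul' _ _ ENNReal.ofReal_ne_top,
          setLIntegral_indicator measurableSet_closedBall, inter_comm]

end RadialIntegrals

section SphericalGeometry

variable {E : Type*} [NormedAddCommGroup E] [NormedSpace ℝ E] {x : E}

theorem exists_mem_sphere_norm_smul_eq_neg (hx : x ≠ 0) :
    ∃ e : sphere (0 : E) 1, ‖x‖ • (e : E) = -x := by
  have hx' : ‖x‖ ≠ 0 := norm_ne_zero_iff.2 hx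
  exact ⟨⟨-(‖x‖⁻¹ • x), by simp [norm_smul, hx']⟩, by simp [smul_smul, hx']⟩

theorem one_sub_le_and_norm_sub_le_of_norm_smul_sub_le {θ : sphere (0 : E) 1} {r R : ℝ}
    (hr : 0 ≤ r) (hr₁ : r ≤ 1) (hxR : 1 - ‖x‖ ≤ 2 * R) (hθ : ‖r • (θ : E) - x‖ ≤ R) :
    1 - r ≤ 3 * R ∧ ‖(θ : E) - x‖ ≤ 4 * R := by
  have hnorm : ‖r • (θ : E)‖ = r := by simp [norm_smul, abs_of_nonneg hr]
  have hdepth : 1 - r ≤ 3 * R := by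
    linarith [norm_sub_norm_le x (r • (θ : E)), norm_sub_rev x (r • (θ : E))]
  have hray : ‖(θ : E) - r • (θ : E)‖ = 1 - r := by
    rw [show (θ : E) - r • (θ : E) = (1 - r) • (θ : E) by module, norm_smul,
      norm_eq_of_mem_sphere, mul_one, norm_of_nonneg (sub_nonneg.2 hr₁)]
  exact ⟨hdepth, by linarith [norm_sub_le_norm_sub_add_norm_sub (θ : E) (r • (θ : E)) x]⟩

theorem one_sub_norm_add_smul_mem_Icc {e θ : sphere (0 : E) 1} {r : ℝ} (hx : ‖x‖ ≤ 1)
    (he : ‖x‖ • (e : E) = -x) (hθ : dist θ e ≤ 1 / 2) (hr : 1 - ‖x‖ ≤ r) (hr' : r ≤ ‖x‖) :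
    1 - ‖x + r • (θ : E)‖ ∈ Icc (r / 2) (2 * r) := by
  have hr₀ : 0 ≤ r := (sub_nonneg.2 hx).trans hr
  have hradial : ‖x + r • (e : E)‖ = ‖x‖ - r := by
    rw [show x + r • (e : E) = -((‖x‖ - r) • (e : E)) by rw [sub_smul, he]; abel, norm_neg,
      norm_smul, norm_eq_of_mem_sphere, mul_one, norm_of_nonneg (sub_nonneg.2 hr')]
  have htilt : ‖r • ((θ : E) - e)‖ ≤ r / 2 := by
    rw [Subtype.dist_eq, dist_eq_norm] at hθ
    rw [norm_smul, norm_of_nonneg hr₀]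
    nlinarith
  have hupper : ‖x + r • (θ : E)‖ ≤ ‖x + r • (e : E)‖ + ‖r • ((θ : E) - e)‖ := by
    rw [show x + r • (θ : E) = x + r • (e : E) + r • ((θ : E) - e) by module]
    exact norm_add_le _ _
  have hlower : ‖x‖ - r ≤ ‖x + r • (θ : E)‖ := by
    simpa [norm_smul, norm_eq_of_mem_sphere, abs_of_nonneg hr₀] using
      norm_sub_norm_le x (-(r • (θ : E)))
  constructor <;> linarith

end SphericalGeometry

section GreenIntegrand

variable {E : Type*} [NormedAddCommGroup E] [NormedSpace ℝ E]

/-- The integrand of `greenPotential`, on the unit ball of an arbitrary finite-dimensional normed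
space: the exponent of `‖x - y‖` is its dimension. -/
noncomputable def greenIntegrand (s β : ℝ) (x y : E) : ℝ :=
  (min (‖x - y‖ ^ 2) ((1 - ‖x‖) * (1 - ‖y‖))) ^ s / ‖x - y‖ ^ finrank ℝ E * (1 - ‖y‖) ^ (-β)

variable {s β : ℝ} {x y : E}

theorem greenIntegrand_nonneg (hx : ‖x‖ ≤ 1) (hy : ‖y‖ ≤ 1) (s β : ℝ) :
    0 ≤ greenIntegrand s β x y := by
  have : 0 ≤ 1 - ‖x‖ := sub_nonneg.2 hx
  have : 0 ≤ 1 - ‖y‖ := sub_nonneg.2 hy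
  unfold greenIntegrand
  positivity

theorem greenIntegrand_le_of_norm_sub_le (hs : 0 ≤ s) (hxy : 0 < ‖x - y‖)
    (hnear : ‖x - y‖ ≤ (1 - ‖x‖) / 2) :
    greenIntegrand s β x y ≤
      2 ^ |β| * (1 - ‖x‖) ^ (-β) * ‖x - y‖ ^ (2 * s - finrank ℝ E) := by
  obtain ⟨hlower, hupper⟩ := abs_le.1 (abs_norm_sub_norm_le x y)
  have hx : 0 < 1 - ‖x‖ := by linarith
  have hy : 0 < 1 - ‖y‖ := by linarith
  calc (min (‖x - y‖ ^ 2) ((1 - ‖x‖) * (1 - ‖y‖))) ^ s / ‖x - y‖ ^ finrank ℝ E * (1 - ‖y‖) ^ (-β)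
    _ ≤ (‖x - y‖ ^ 2) ^ s / ‖x - y‖ ^ finrank ℝ E * (2 ^ |-β| * (1 - ‖x‖) ^ (-β)) := by
        gcongr
        · exact min_le_left _ _
        · exact rpow_le_two_rpow_abs_mul_rpow hx (by linarith) (by linarith) (-β)
    _ = _ := by
        rw [abs_neg, ← rpow_natCast_mul (norm_nonneg _), rpow_sub hxy, rpow_natCast]
        push_cast
        ring

theorem greenIntegrand_le_of_norm_le_one (hs : 0 ≤ s) (hx : ‖x‖ ≤ 1) (hy : ‖y‖ < 1) :
    greenIntegrand s β x y ≤
      (1 - ‖x‖) ^ s * ((1 - ‖y‖) ^ (s - β) * ‖x - y‖ ^ (-finrank ℝ E : ℝ)) := by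
  have hx' : 0 ≤ 1 - ‖x‖ := sub_nonneg.2 hx
  have hy' : 0 < 1 - ‖y‖ := sub_pos.2 hy
  calc (min (‖x - y‖ ^ 2) ((1 - ‖x‖) * (1 - ‖y‖))) ^ s / ‖x - y‖ ^ finrank ℝ E * (1 - ‖y‖) ^ (-β)
    _ ≤ ((1 - ‖x‖) * (1 - ‖y‖)) ^ s / ‖x - y‖ ^ finrank ℝ E * (1 - ‖y‖) ^ (-β) := by
        gcongr
        exact min_le_right _ _
    _ = _ := by
        rw [mul_rpow hx' hy'.le, sub_eq_add_neg s, rpow_add hy', rpow_neg (norm_nonneg _),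
          rpow_natCast]
        ring

theorem le_greenIntegrand (hs : 0 ≤ s) (hx : ‖x‖ ≤ 1) (hy : ‖y‖ < 1)
    (hxy : (1 - ‖x‖) * (1 - ‖y‖) ≤ 2 * ‖x - y‖ ^ 2) :
    2⁻¹ ^ s * (1 - ‖x‖) ^ s * ((1 - ‖y‖) ^ (s - β) * ‖x - y‖ ^ (-finrank ℝ E : ℝ)) ≤
      greenIntegrand s β x y := by
  have hx' : 0 ≤ 1 - ‖x‖ := sub_nonneg.2 hx
  have hy' : 0 < 1 - ‖y‖ := sub_pos.2 hy
  have hxy' : 0 ≤ (1 - ‖x‖) * (1 - ‖y‖) := by positivity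
  calc _ = (2⁻¹ * ((1 - ‖x‖) * (1 - ‖y‖))) ^ s / ‖x - y‖ ^ finrank ℝ E * (1 - ‖y‖) ^ (-β) := by
        rw [mul_rpow (by positivity) hxy', mul_rpow hx' hy'.le, sub_eq_add_neg s, rpow_add hy',
          rpow_neg (norm_nonneg _), rpow_natCast]
        ring
    _ ≤ _ := by
        unfold greenIntegrand
        gcongr
        exact le_min (by linarith) (by linarith)

theorem le_rpow_mul_greenIntegrand_add_smul {θ : sphere (0 : E) 1} {r : ℝ} (hs : 0 ≤ s)
    (hx : ‖x‖ < 1) (hr : 1 - ‖x‖ ≤ r) (hθ : 1 - ‖x + r • (θ : E)‖ ∈ Icc (r / 2) (2 * r)) :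
    2⁻¹ ^ s * (2 ^ |s - β|)⁻¹ * (1 - ‖x‖) ^ s * r ^ (s - β - 1) ≤
      r ^ ((finrank ℝ E : ℝ) - 1) * greenIntegrand s β x (x + r • (θ : E)) := by
  set y := x + r • (θ : E)
  have hr₀ : 0 < r := (sub_pos.2 hx).trans_le hr
  have hy : 0 < 1 - ‖y‖ := by linarith [hθ.1]
  have hnorm : ‖x - y‖ = r := by simp [y, norm_smul, abs_of_pos hr₀]
  have hweight : (2 ^ |s - β|)⁻¹ * r ^ (s - β) ≤ (1 - ‖y‖) ^ (s - β) :=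
    (inv_mul_le_iff₀ (by positivity)).2
      (rpow_le_two_rpow_abs_mul_rpow hy (by linarith [hθ.1]) hθ.2 (s - β))
  have hkernel := le_greenIntegrand hs (β := β) hx.le (sub_pos.1 hy) (by
    rw [hnorm]
    nlinarith [mul_le_mul hr hθ.2 hy.le hr₀.le])
  rw [hnorm] at hkernel
  have : 0 ≤ (1 - ‖x‖) ^ s := rpow_nonneg (sub_pos.2 hx).le s
  calc _ = r ^ ((finrank ℝ E : ℝ) - 1) * (2⁻¹ ^ s * (1 - ‖x‖) ^ s *
        ((2 ^ |s - β|)⁻¹ * r ^ (s - β) * r ^ (-finrank ℝ E : ℝ))) := by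
        rw [show s - β - 1 = (finrank ℝ E - 1) + (s - β) + -finrank ℝ E by ring,
          rpow_add hr₀, rpow_add hr₀]
        ring
    _ ≤ r ^ ((finrank ℝ E : ℝ) - 1) * (2⁻¹ ^ s * (1 - ‖x‖) ^ s *
        ((1 - ‖y‖) ^ (s - β) * r ^ (-finrank ℝ E : ℝ))) := by gcongr
    _ ≤ _ := by gcongr

variable [MeasurableSpace E] [BorelSpace E]

theorem measurable_greenIntegrand (s β : ℝ) (x : E) : Measurable (greenIntegrand s β x) := by
  unfold greenIntegrand
  fun_prop

/-- The Green potential of `(1 - ‖y‖) ^ (-β)` on the unit ball of a normed space, with respect to a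
reference measure `μ`. -/
noncomputable def ballGreenPotential (μ : Measure E) (s β : ℝ) (x : E) : ℝ :=
  ∫ y in ball 0 1, greenIntegrand s β x y ∂μ

theorem ballGreenPotential_eq_toReal (μ : Measure E) (hx : ‖x‖ ≤ 1) (s β : ℝ) :
    ballGreenPotential μ s β x =
      (∫⁻ y in ball 0 1, ENNReal.ofReal (greenIntegrand s β x y) ∂μ).toReal := by
  refine integral_eq_lintegral_of_nonneg_ae ?_
    (measurable_greenIntegrand s β x).aestronglyMeasurable
  filter_upwards [ae_restrict_mem measurableSet_ball] with y hy
  exact greenIntegrand_nonneg hx (mem_ball_zero_iff.1 hy).le s β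

end GreenIntegrand

variable {E : Type*} [NormedAddCommGroup E] [NormedSpace ℝ E] [FiniteDimensional ℝ E]
  [MeasurableSpace E] [BorelSpace E] (μ : Measure E) [μ.IsAddHaarMeasure]

section PolarCoordinates

variable [Nontrivial E]

theorem lintegral_eq_lintegral_toSphere {f : E → ℝ≥0∞} (hf : Measurable f) (x : E) :
    ∫⁻ y, f y ∂μ = ∫⁻ θ : sphere (0 : E) 1, (∫⁻ r in Ioi (0 : ℝ),
      ENNReal.ofReal (r ^ ((finrank ℝ E : ℝ) - 1)) * f (x + r • (θ : E))) ∂μ.toSphere := by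
  have hf' : Measurable fun p : sphere (0 : E) 1 × Ioi (0 : ℝ) ↦ f (x + (p.2 : ℝ) • (p.1 : E)) := by
    fun_prop
  calc ∫⁻ y, f y ∂μ = ∫⁻ y : ({0}ᶜ : Set E), f (x + y) ∂μ.comap (↑) := by
        rw [lintegral_subtype_comap (measurableSet_singleton 0).compl (fun y ↦ f (x + y)),
          restrict_compl_singleton, lintegral_add_left_eq_self]
    _ = ∫⁻ p, f (x + (p.2 : ℝ) • (p.1 : E)) ∂μ.toSphere.prod (volumeIoiPow (finrank ℝ E - 1)) := by
        rw [← μ.measurePreserving_homeomorphUnitSphereProd.lintegral_comp hf']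
        refine lintegral_congr fun y ↦ ?_
        simp [norm_ne_zero_iff.2 y.2]
    _ = _ := by
        rw [lintegral_prod _ hf'.aemeasurable]
        refine lintegral_congr fun θ ↦ ?_
        have hfθ : Measurable fun r : Ioi (0 : ℝ) ↦ f (x + (r : ℝ) • (θ : E)) := by fun_prop
        rw [volumeIoiPow, lintegral_withDensity_eq_lintegral_mul _ (by fun_prop) hfθ,
          ← lintegral_subtype_comap measurableSet_Ioi]
        refine lintegral_congr fun r ↦ ?_
        rw [Pi.mul_apply, ← rpow_natCast, Nat.cast_pred Module.finrank_pos]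

variable {A : Set E} {f : E → ℝ≥0∞} {T : Set (sphere (0 : E) 1)} {I : Set ℝ} {b : ℝ → ℝ≥0∞} {x : E}

theorem lintegral_le_toSphere_mul_lintegral (hA : MeasurableSet A) (hf : Measurable f)
    (h : ∀ (θ : sphere (0 : E) 1) (r : ℝ), 0 < r → x + r • (θ : E) ∈ A → θ ∈ T ∧ r ∈ I ∧
      ENNReal.ofReal (r ^ ((finrank ℝ E : ℝ) - 1)) * f (x + r • (θ : E)) ≤ b r) :
    ∫⁻ y in A, f y ∂μ ≤ μ.toSphere T * ∫⁻ r in I, b r := by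
  rw [← lintegral_indicator hA, lintegral_eq_lintegral_toSphere μ (hf.indicator hA) x, mul_comm]
  refine le_trans (lintegral_mono fun θ ↦ ?_) (lintegral_indicator_const_le T _)
  by_cases hθ : θ ∈ T
  · rw [indicator_of_mem hθ]
    calc _ ≤ ∫⁻ r in Ioi 0, I.indicator b r := by
          refine setLIntegral_mono' measurableSet_Ioi fun r hr ↦ ?_
          by_cases hy : x + r • (θ : E) ∈ A
          · obtain ⟨-, hrI, hb⟩ := h θ r hr hy
            rwa [indicator_of_mem hy, indicator_of_mem hrI]
          · simp [indicator_of_notMem hy]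
      _ ≤ ∫⁻ r, I.indicator b r := setLIntegral_le_lintegral _ _
      _ ≤ ∫⁻ r in I, b r := lintegral_indicator_le _ _
  · rw [indicator_of_notMem hθ, nonpos_iff_eq_zero]
    refine setLIntegral_eq_zero measurableSet_Ioi fun r hr ↦ ?_
    simp only [indicator_of_notMem fun hy ↦ hθ (h θ r hr hy).1, mul_zero, Pi.zero_apply]

theorem toSphere_mul_lintegral_le_lintegral (hA : MeasurableSet A) (hf : Measurable f)
    (hT : MeasurableSet T) (hI : MeasurableSet I) (hI₀ : I ⊆ Ioi 0)
    (h : ∀ θ ∈ T, ∀ r ∈ I, x + r • (θ : E) ∈ A ∧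
      b r ≤ ENNReal.ofReal (r ^ ((finrank ℝ E : ℝ) - 1)) * f (x + r • (θ : E))) :
    μ.toSphere T * ∫⁻ r in I, b r ≤ ∫⁻ y in A, f y ∂μ := by
  rw [← lintegral_indicator hA, lintegral_eq_lintegral_toSphere μ (hf.indicator hA) x, mul_comm,
    ← setLIntegral_const]
  refine (setLIntegral_mono' hT fun θ hθ ↦ ?_).trans (setLIntegral_le_lintegral T _)
  refine (setLIntegral_mono' hI fun r hr ↦ ?_).trans (lintegral_mono_set hI₀)
  obtain ⟨hy, hb⟩ := h θ hθ r hr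
  rwa [indicator_of_mem hy]

theorem toSphere_cap_le (z : E) {r : ℝ} (hr : 0 < r) :
    μ.toSphere {θ | ‖(θ : E) - z‖ ≤ r} ≤
      ENNReal.ofReal (2 ^ finrank ℝ E * r ^ ((finrank ℝ E : ℝ) - 1)) * μ (ball 0 1) := by
  have hcone : μ.toSphere {θ | ‖(θ : E) - z‖ ≤ r} * ENNReal.ofReal r ≤
      ENNReal.ofReal ((2 * r) ^ finrank ℝ E) * μ (ball 0 1) := by
    have := toSphere_mul_lintegral_le_lintegral μ (A := closedBall z (2 * r)) (f := 1)
      (T := {θ | ‖(θ : E) - z‖ ≤ r}) (I := Ioc 1 (1 + r)) (b := 1) (x := 0) measurableSet_closedBall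
      measurable_one (measurableSet_le (by fun_prop) (by fun_prop)) measurableSet_Ioc
      (fun t ht ↦ one_pos.trans ht.1) fun θ hθ t ⟨ht₁, ht⟩ ↦ ⟨?_, ?_⟩
    · simpa [addHaar_closedBall μ z (by positivity : 0 ≤ 2 * r)] using this
    · have hθ' : ‖(θ : E) - z‖ ≤ r := hθ
      have hray : ‖t • (θ : E) - θ‖ = t - 1 := by
        rw [show t • (θ : E) - θ = (t - 1) • (θ : E) by module, norm_smul,
          norm_eq_of_mem_sphere, mul_one, norm_of_nonneg (by linarith)]
      rw [zero_add, mem_closedBall_iff_norm]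
      linarith [norm_sub_le_norm_sub_add_norm_sub (t • (θ : E)) θ z]
    · have hdim : (1 : ℝ) ≤ finrank ℝ E := Nat.one_le_cast.2 Module.finrank_pos
      simpa using ENNReal.ofReal_le_ofReal (one_le_rpow ht₁.le (sub_nonneg.2 hdim))
  calc _ ≤ ENNReal.ofReal ((2 * r) ^ finrank ℝ E) * μ (ball 0 1) / ENNReal.ofReal r :=
        (ENNReal.le_div_iff_mul_le (by simp [hr]) (by simp)).2 hcone
    _ = _ := by
        rw [ENNReal.mul_div_right_comm, ← ENNReal.ofReal_div_of_pos hr, mul_pow, mul_div_assoc,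
          rpow_sub_one hr.ne', rpow_natCast]

end PolarCoordinates

section WeightedIntegrals

theorem lintegral_one_sub_norm_rpow_le [Nontrivial E] {γ : ℝ} (hγ : -1 < γ) :
    ∃ C ≠ ∞, ∀ (x : E) (R : ℝ), 0 < R → 1 - ‖x‖ ≤ 2 * R →
      ∫⁻ y in ball 0 1 ∩ closedBall x R, ENNReal.ofReal ((1 - ‖y‖) ^ γ) ∂μ ≤
        C * ENNReal.ofReal (R ^ (finrank ℝ E + γ)) := by
  set n := (finrank ℝ E : ℝ)
  have hn : 0 ≤ n - 1 := sub_nonneg.2 (Nat.one_le_cast.2 Module.finrank_pos)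
  have hγ' : 0 < γ + 1 := by linarith
  refine ⟨ENNReal.ofReal (2 ^ finrank ℝ E * 4 ^ (n - 1) * (3 ^ (γ + 1) / (γ + 1))) * μ (ball 0 1),
    ENNReal.mul_ne_top ENNReal.ofReal_ne_top measure_ball_lt_top.ne, fun x R hR hxR ↦ ?_⟩
  calc _ ≤ μ.toSphere {θ | ‖(θ : E) - x‖ ≤ 4 * R} *
        ∫⁻ r in (fun r ↦ 1 - r) ⁻¹' Ioc 0 (3 * R), ENNReal.ofReal ((1 - r) ^ γ) := by
        refine lintegral_le_toSphere_mul_lintegral μ (x := 0)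
          (measurableSet_ball.inter measurableSet_closedBall) (by fun_prop) fun θ r hr hy ↦ ?_
        have hnorm : ‖r • (θ : E)‖ = r := by simp [norm_smul, abs_of_pos hr]
        rw [zero_add, mem_inter_iff, mem_ball_zero_iff, mem_closedBall_iff_norm, hnorm] at hy
        obtain ⟨hdepth, hcap⟩ :=
          one_sub_le_and_norm_sub_le_of_norm_smul_sub_le hr.le hy.1.le hxR hy.2
        refine ⟨hcap, ⟨by linarith, hdepth⟩, ?_⟩
        rw [zero_add, hnorm]
        exact mul_le_of_le_one_left' (ENNReal.ofReal_le_one.2 (rpow_le_one hr.le hy.1.le hn))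
    _ = μ.toSphere {θ | ‖(θ : E) - x‖ ≤ 4 * R} *
        ENNReal.ofReal ((3 * R) ^ (γ + 1) / (γ + 1)) := by
        rw [(measurePreserving_sub_left volume 1).setLIntegral_comp_preimage measurableSet_Ioc
          (f := fun t ↦ ENNReal.ofReal (t ^ γ)) (by fun_prop),
          lintegral_Ioc_zero_rpow (by positivity) hγ]
    _ ≤ ENNReal.ofReal (2 ^ finrank ℝ E * (4 * R) ^ (n - 1)) * μ (ball 0 1) *
        ENNReal.ofReal ((3 * R) ^ (γ + 1) / (γ + 1)) := by
        gcongr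
        exact toSphere_cap_le μ x (by positivity)
    _ = _ := by
        rw [mul_right_comm, mul_right_comm _ (μ _), ← ENNReal.ofReal_mul (by positivity),
          ← ENNReal.ofReal_mul (by positivity), mul_rpow (by norm_num) hR.le,
          mul_rpow (by norm_num) hR.le, show n + γ = (n - 1) + (γ + 1) by ring,
          rpow_add hR (n - 1)]
        congr 2
        ring

theorem lintegral_one_sub_norm_rpow_mul_norm_rpow_le [Nontrivial E] {γ : ℝ} (hγ : -1 < γ) :
    ∃ C ≠ ∞, ∀ x : E, ‖x‖ < 1 →
      ∫⁻ y in ball 0 1 \ closedBall x ((1 - ‖x‖) / 2),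
        ENNReal.ofReal ((1 - ‖y‖) ^ γ) * ENNReal.ofReal (‖x - y‖ ^ (-finrank ℝ E : ℝ)) ∂μ ≤
      C * ∫⁻ R in Ioc ((1 - ‖x‖) / 2) 4, ENNReal.ofReal (R ^ (γ - 1)) := by
  set n := (finrank ℝ E : ℝ)
  obtain ⟨C, hC, hball⟩ := lintegral_one_sub_norm_rpow_le μ hγ
  refine ⟨ENNReal.ofReal (2 ^ |-n - 1|) * C, ENNReal.mul_ne_top ENNReal.ofReal_ne_top hC,
    fun x hx ↦ ?_⟩
  set F := ball 0 1 \ closedBall x ((1 - ‖x‖) / 2)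
  have hF : MeasurableSet F := measurableSet_ball.diff measurableSet_closedBall
  have hannulus : ∀ y ∈ F, ‖x - y‖ ∈ Icc ((1 - ‖x‖) / 2) 2 := fun y ⟨hy, hxy⟩ ↦ by
    rw [mem_ball_zero_iff] at hy
    rw [mem_closedBall_iff_norm', not_le] at hxy
    exact ⟨hxy.le, by linarith [norm_sub_le x y]⟩
  calc ∫⁻ y in F, ENNReal.ofReal ((1 - ‖y‖) ^ γ) * ENNReal.ofReal (‖x - y‖ ^ (-n)) ∂μ
    _ ≤ ENNReal.ofReal (2 ^ |-n - 1|) *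
          ∫⁻ R in Ioc ((1 - ‖x‖) / 2) (2 * 2), ENNReal.ofReal (R ^ (-n - 1)) *
            ∫⁻ y in F ∩ closedBall x R, ENNReal.ofReal ((1 - ‖y‖) ^ γ) ∂μ := by
        simpa only [sub_add_cancel, dist_eq_norm] using
          setLIntegral_mul_dist_rpow_le μ hF (by fun_prop) (half_pos (sub_pos.2 hx))
            (by simpa only [dist_eq_norm] using hannulus) (-n - 1)
    _ ≤ ENNReal.ofReal (2 ^ |-n - 1|) *
          ∫⁻ R in Ioc ((1 - ‖x‖) / 2) (2 * 2), C * ENNReal.ofReal (R ^ (γ - 1)) := by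
        refine mul_le_mul_right (setLIntegral_mono' measurableSet_Ioc fun R ⟨hxR, _⟩ ↦ ?_) _
        have hR : 0 < R := by linarith
        calc ENNReal.ofReal (R ^ (-n - 1)) *
              ∫⁻ y in F ∩ closedBall x R, ENNReal.ofReal ((1 - ‖y‖) ^ γ) ∂μ
          _ ≤ ENNReal.ofReal (R ^ (-n - 1)) * (C * ENNReal.ofReal (R ^ (n + γ))) := by
              gcongr
              exact (lintegral_mono_set (inter_subset_inter_left _ sdiff_subset)).trans
                (hball x R hR (by linarith))
          _ = _ := by
              rw [mul_left_comm, ← ENNReal.ofReal_mul (by positivity), ← rpow_add hR]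
              ring_nf
    _ = _ := by
        rw [lintegral_const_mul' _ _ hC, mul_assoc, show (2 : ℝ) * 2 = 4 by norm_num]

end WeightedIntegrals

section UpperBound

variable [Nontrivial E] {s β : ℝ}

theorem lintegral_greenIntegrand_closedBall_le_rpow (β : ℝ) (hs : 0 < s) {x : E} (hx : ‖x‖ < 1) :
    ∫⁻ y in closedBall x ((1 - ‖x‖) / 2), ENNReal.ofReal (greenIntegrand s β x y) ∂μ ≤
      μ.toSphere univ * ENNReal.ofReal
        (2 ^ |β| * (1 - ‖x‖) ^ (-β) * (((1 - ‖x‖) / 2) ^ (2 * s) / (2 * s))) := by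
  have : 0 < 1 - ‖x‖ := sub_pos.2 hx
  calc ∫⁻ y in closedBall x ((1 - ‖x‖) / 2), ENNReal.ofReal (greenIntegrand s β x y) ∂μ
    _ ≤ μ.toSphere univ * ∫⁻ r in Ioc 0 ((1 - ‖x‖) / 2),
          ENNReal.ofReal (2 ^ |β| * (1 - ‖x‖) ^ (-β)) * ENNReal.ofReal (r ^ (2 * s - 1)) := by
        refine lintegral_le_toSphere_mul_lintegral μ (x := x) measurableSet_closedBall
          (measurable_greenIntegrand s β x).ennreal_ofReal fun θ r hr hy ↦ ?_
        have hnorm : ‖x - (x + r • (θ : E))‖ = r := by simp [norm_smul, abs_of_pos hr]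
        rw [mem_closedBall_iff_norm', hnorm] at hy
        refine ⟨mem_univ θ, ⟨hr, hy⟩, ?_⟩
        rw [← ENNReal.ofReal_mul (by positivity), ← ENNReal.ofReal_mul (by positivity)]
        refine ENNReal.ofReal_le_ofReal ?_
        have hkernel := greenIntegrand_le_of_norm_sub_le (β := β) hs.le
          (hnorm.symm ▸ hr) (hnorm.le.trans hy)
        rw [hnorm] at hkernel
        calc _ ≤ r ^ ((finrank ℝ E : ℝ) - 1) *
              (2 ^ |β| * (1 - ‖x‖) ^ (-β) * r ^ (2 * s - finrank ℝ E)) := by gcongr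
          _ = _ := by
            rw [show 2 * s - 1 = (finrank ℝ E - 1) + (2 * s - finrank ℝ E) by ring, rpow_add hr]
            ring
    _ = _ := by
        rw [lintegral_const_mul' _ _ ENNReal.ofReal_ne_top,
          lintegral_Ioc_zero_rpow (by positivity) (by linarith), sub_add_cancel,
          ← ENNReal.ofReal_mul (by positivity)]

theorem lintegral_greenIntegrand_closedBall_le (β : ℝ) (hs : 0 < s) :
    ∃ C ≠ ∞, ∀ x : E, ‖x‖ < 1 →
      ∫⁻ y in closedBall x ((1 - ‖x‖) / 2), ENNReal.ofReal (greenIntegrand s β x y) ∂μ ≤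
        C * (ENNReal.ofReal ((1 - ‖x‖) ^ s) *
          ∫⁻ R in Ioc ((1 - ‖x‖) / 2) 4, ENNReal.ofReal (R ^ (s - β - 1))) := by
  set c := 2 ^ |β| * 2 ^ (-(s + β)) / (2 * s)
  refine ⟨μ.toSphere univ * ENNReal.ofReal c * ENNReal.ofReal (2 ^ |s - β - 1|), ENNReal.mul_ne_top
    (ENNReal.mul_ne_top (measure_ne_top _ _) ENNReal.ofReal_ne_top) ENNReal.ofReal_ne_top,
    fun x hx ↦ (lintegral_greenIntegrand_closedBall_le_rpow μ β hs hx).trans ?_⟩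
  obtain ⟨ρ, hρ⟩ : ∃ ρ, 1 - ‖x‖ = 2 * ρ := ⟨(1 - ‖x‖) / 2, by ring⟩
  have hρ₀ : 0 < ρ := by linarith
  have hρ₁ : 2 * ρ ≤ 4 := by linarith [norm_nonneg x]
  rw [hρ, mul_div_cancel_left₀ ρ two_ne_zero]
  have hscale : 2 ^ |β| * (2 * ρ) ^ (-β) * (ρ ^ (2 * s) / (2 * s)) =
      c * ((2 * ρ) ^ s * ρ ^ (s - β - 1 + 1)) := by
    have htwo : (2 : ℝ) ^ (-β) = 2 ^ (-(s + β)) * 2 ^ s := by rw [← rpow_add two_pos]; ring_nf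
    have hpow : ρ ^ (-β) * ρ ^ (2 * s) = ρ ^ s * ρ ^ (s - β - 1 + 1) := by
      rw [← rpow_add hρ₀, ← rpow_add hρ₀]; ring_nf
    rw [mul_rpow zero_le_two hρ₀.le, mul_rpow zero_le_two hρ₀.le, htwo]
    linear_combination c * 2 ^ s * hpow
  calc _ = μ.toSphere univ * ENNReal.ofReal c *
          (ENNReal.ofReal ((2 * ρ) ^ s) * ENNReal.ofReal (ρ ^ (s - β - 1 + 1))) := by
        rw [hscale, ENNReal.ofReal_mul (by positivity), ENNReal.ofReal_mul (by positivity),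
          mul_assoc]
    _ ≤ μ.toSphere univ * ENNReal.ofReal c *
          (ENNReal.ofReal ((2 * ρ) ^ s) * (ENNReal.ofReal (2 ^ |s - β - 1|) *
            ∫⁻ R in Ioc ρ 4, ENNReal.ofReal (R ^ (s - β - 1)))) := by
        gcongr
        exact (ofReal_rpow_add_one_le_lintegral_Ioc hρ₀ _).trans (by gcongr)
    _ = _ := by ring

theorem lintegral_greenIntegrand_diff_closedBall_le (hs : 0 ≤ s) (hβ : β < 1 + s) :
    ∃ C ≠ ∞, ∀ x : E, ‖x‖ < 1 →
      ∫⁻ y in ball 0 1 \ closedBall x ((1 - ‖x‖) / 2), ENNReal.ofReal (greenIntegrand s β x y) ∂μ ≤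
        C * (ENNReal.ofReal ((1 - ‖x‖) ^ s) *
          ∫⁻ R in Ioc ((1 - ‖x‖) / 2) 4, ENNReal.ofReal (R ^ (s - β - 1))) := by
  obtain ⟨C, hC, hweight⟩ :=
    lintegral_one_sub_norm_rpow_mul_norm_rpow_le μ (show -1 < s - β by linarith)
  refine ⟨C, hC, fun x hx ↦ ?_⟩
  calc ∫⁻ y in ball 0 1 \ closedBall x ((1 - ‖x‖) / 2), ENNReal.ofReal (greenIntegrand s β x y) ∂μ
    _ ≤ ∫⁻ y in ball 0 1 \ closedBall x ((1 - ‖x‖) / 2), ENNReal.ofReal ((1 - ‖x‖) ^ s) *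
          (ENNReal.ofReal ((1 - ‖y‖) ^ (s - β)) *
            ENNReal.ofReal (‖x - y‖ ^ (-finrank ℝ E : ℝ))) ∂μ := by
        refine setLIntegral_mono' (measurableSet_ball.diff measurableSet_closedBall) fun y hy ↦ ?_
        have hy₁ : ‖y‖ < 1 := mem_ball_zero_iff.1 hy.1
        rw [← ENNReal.ofReal_mul (rpow_nonneg (sub_pos.2 hy₁).le _),
          ← ENNReal.ofReal_mul (rpow_nonneg (sub_pos.2 hx).le _)]
        exact ENNReal.ofReal_le_ofReal (greenIntegrand_le_of_norm_le_one hs hx.le hy₁)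
    _ ≤ ENNReal.ofReal ((1 - ‖x‖) ^ s) *
          (C * ∫⁻ R in Ioc ((1 - ‖x‖) / 2) 4, ENNReal.ofReal (R ^ (s - β - 1))) := by
        rw [lintegral_const_mul' _ _ ENNReal.ofReal_ne_top]
        gcongr
        exact hweight x hx
    _ = _ := mul_left_comm _ _ _

theorem lintegral_greenIntegrand_le (hs : 0 < s) (hβ : β < 1 + s) :
    ∃ C ≠ ∞, ∀ x : E, ‖x‖ < 1 →
      ∫⁻ y in ball 0 1, ENNReal.ofReal (greenIntegrand s β x y) ∂μ ≤
        C * (ENNReal.ofReal ((1 - ‖x‖) ^ s) *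
          ∫⁻ R in Ioc ((1 - ‖x‖) / 2) 4, ENNReal.ofReal (R ^ (s - β - 1))) := by
  obtain ⟨C₁, hC₁, hnear⟩ := lintegral_greenIntegrand_closedBall_le μ β hs
  obtain ⟨C₂, hC₂, hfar⟩ := lintegral_greenIntegrand_diff_closedBall_le μ hs.le hβ
  refine ⟨C₁ + C₂, ENNReal.add_ne_top.2 ⟨hC₁, hC₂⟩, fun x hx ↦ ?_⟩
  calc _ ≤ ∫⁻ y in closedBall x ((1 - ‖x‖) / 2) ∪ ball 0 1 \ closedBall x ((1 - ‖x‖) / 2),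
          ENNReal.ofReal (greenIntegrand s β x y) ∂μ :=
        lintegral_mono_set (by rw [union_sdiff_self]; exact subset_union_right)
    _ ≤ _ := (lintegral_union_le _ _ _).trans (add_le_add (hnear x hx) (hfar x hx))
    _ = _ := (add_mul _ _ _).symm

end UpperBound

section LowerBound

variable {s : ℝ}

theorem le_lintegral_greenIntegrand [Nontrivial E] (hs : 0 ≤ s) (β : ℝ) :
    ∃ c ≠ 0, c ≠ ∞ ∧ ∀ x : E, ‖x‖ ∈ Ico (1 / 2) 1 →
      c * (ENNReal.ofReal ((1 - ‖x‖) ^ s) *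
        ∫⁻ r in Ioc (1 - ‖x‖) (1 / 2), ENNReal.ofReal (r ^ (s - β - 1))) ≤
      ∫⁻ y in ball 0 1, ENNReal.ofReal (greenIntegrand s β x y) ∂μ := by
  set κ : ℝ := 2⁻¹ ^ s * (2 ^ |s - β|)⁻¹
  have hκ : 0 < κ := by positivity
  set cap := toSphereBallBound (finrank ℝ E) (1 / 2) * μ (ball 0 1)
  have hcap : cap ≠ 0 := mul_ne_zero (by exact_mod_cast (toSphereBallBound_pos _ _).ne')
    (measure_ball_pos μ 0 one_pos).ne'
  refine ⟨cap * ENNReal.ofReal κ, mul_ne_zero hcap (by simpa using hκ), ENNReal.mul_ne_top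
    (ENNReal.mul_ne_top ENNReal.coe_ne_top measure_ball_lt_top.ne) ENNReal.ofReal_ne_top,
    fun x ⟨hx, hx₁⟩ ↦ ?_⟩
  have hd : 0 < 1 - ‖x‖ := sub_pos.2 hx₁
  obtain ⟨e, he⟩ := exists_mem_sphere_norm_smul_eq_neg (norm_pos_iff.1 (one_half_pos.trans_le hx))
  calc _ = cap * ∫⁻ r in Ioc (1 - ‖x‖) (1 / 2),
        ENNReal.ofReal (κ * (1 - ‖x‖) ^ s) * ENNReal.ofReal (r ^ (s - β - 1)) := by
        rw [lintegral_const_mul' _ _ ENNReal.ofReal_ne_top, ENNReal.ofReal_mul hκ.le]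
        ring
    _ ≤ μ.toSphere (ball e (1 / 2)) * ∫⁻ r in Ioc (1 - ‖x‖) (1 / 2),
        ENNReal.ofReal (κ * (1 - ‖x‖) ^ s) * ENNReal.ofReal (r ^ (s - β - 1)) := by
        gcongr
        exact toSphereBallBound_mul_measure_unitBall_le_toSphere_ball μ one_half_pos e
    _ ≤ _ := by
        refine toSphere_mul_lintegral_le_lintegral μ (x := x) measurableSet_ball
          (measurable_greenIntegrand s β x).ennreal_ofReal measurableSet_ball measurableSet_Ioc
          (fun r hr ↦ hd.trans hr.1) fun θ hθ r ⟨hxr, hr⟩ ↦ ?_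
        have hr₀ : 0 < r := hd.trans hxr
        have hdist :=
          one_sub_norm_add_smul_mem_Icc hx₁.le he (mem_ball.1 hθ).le hxr.le (hr.trans hx)
        refine ⟨mem_ball_zero_iff.2 (by linarith [hdist.1]), ?_⟩
        rw [← ENNReal.ofReal_mul (by positivity), ← ENNReal.ofReal_mul (by positivity)]
        exact ENNReal.ofReal_le_ofReal
          (le_rpow_mul_greenIntegrand_add_smul hs hx₁ hxr.le hdist)

end LowerBound

section Potential

variable [Nontrivial E] {s β : ℝ}

theorem ballGreenPotential_integral_bounds (hs : 0 < s) (hβ : β < 1 + s) :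
    ∃ c C : ℝ, 0 < c ∧ 0 ≤ C ∧ ∀ x : E, ‖x‖ ∈ Ico (1 / 2) 1 →
      c * ((1 - ‖x‖) ^ s * ∫ r in (1 - ‖x‖)..(1 / 2), r ^ (s - β - 1)) ≤
        ballGreenPotential μ s β x ∧
      ballGreenPotential μ s β x ≤
        C * ((1 - ‖x‖) ^ s * ∫ r in ((1 - ‖x‖) / 2)..4, r ^ (s - β - 1)) := by
  obtain ⟨c, hc₀, hc, hlower⟩ := le_lintegral_greenIntegrand μ hs.le β
  obtain ⟨C, hC, hupper⟩ := lintegral_greenIntegrand_le μ hs hβ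
  refine ⟨c.toReal, C.toReal, ENNReal.toReal_pos hc₀ hc, ENNReal.toReal_nonneg,
    fun x ⟨hx, hx₁⟩ ↦ ?_⟩
  have hd : 0 < 1 - ‖x‖ := sub_pos.2 hx₁
  have hprofile {a b : ℝ} (ha : 0 < a) (hab : a ≤ b) :
      (ENNReal.ofReal ((1 - ‖x‖) ^ s) * ∫⁻ r in Ioc a b, ENNReal.ofReal (r ^ (s - β - 1))).toReal =
        (1 - ‖x‖) ^ s * ∫ r in a..b, r ^ (s - β - 1) := by
    rw [lintegral_Ioc_rpow ha hab, ENNReal.toReal_mul, ENNReal.toReal_ofReal (by positivity),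
      ENNReal.toReal_ofReal (intervalIntegral.integral_nonneg hab fun r hr ↦
        rpow_nonneg (ha.le.trans hr.1) _)]
  have hfinite : C * (ENNReal.ofReal ((1 - ‖x‖) ^ s) *
      ∫⁻ R in Ioc ((1 - ‖x‖) / 2) 4, ENNReal.ofReal (R ^ (s - β - 1))) ≠ ∞ := by
    rw [lintegral_Ioc_rpow (by positivity) (by linarith [norm_nonneg x])]
    finiteness
  rw [ballGreenPotential_eq_toReal μ hx₁.le, ← hprofile hd (by linarith),
    ← hprofile (half_pos hd) (by linarith), ← ENNReal.toReal_mul, ← ENNReal.toReal_mul]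
  exact ⟨ENNReal.toReal_mono (ne_top_of_le_ne_top hfinite (hupper x hx₁)) (hlower x ⟨hx, hx₁⟩),
    ENNReal.toReal_mono hfinite (hupper x hx₁)⟩

end Potential

section RadialProfile

/-- `g` is comparable, near `0`, to the radial profile `d ↦ ∫ r in d..1, r ^ (γ - 1)`. The lower and
upper bounds are imposed on the intervals on which the profile bounds the Green potential. -/
def RadialProfileAsymp (γ : ℝ) (g : ℝ → ℝ) : Prop :=
  ∃ c C : ℝ, 0 < c ∧ 0 < C ∧ ∀ d ∈ Ioo (0 : ℝ) (1 / 4),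
    c * g d ≤ ∫ r in d..(1 / 2), r ^ (γ - 1) ∧ ∫ r in (d / 2)..4, r ^ (γ - 1) ≤ C * g d

theorem integral_rpow_sub_one {a b γ : ℝ} (ha : 0 < a) (hab : a ≤ b) (hγ : γ ≠ 0) :
    ∫ r in a..b, r ^ (γ - 1) = (b ^ γ - a ^ γ) / γ := by
  rw [integral_rpow (.inr ⟨by simpa [sub_eq_iff_eq_add] using hγ,
    notMem_uIcc_of_lt ha (ha.trans_le hab)⟩), sub_add_cancel]

theorem radialProfileAsymp_one {γ : ℝ} (hγ : 0 < γ) : RadialProfileAsymp γ fun _ ↦ 1 := by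
  refine ⟨((1 / 2) ^ γ - (1 / 4) ^ γ) / γ, 4 ^ γ / γ, div_pos (sub_pos.2 ?_) hγ, by positivity,
    fun d ⟨hd, hd'⟩ ↦ ⟨?_, ?_⟩⟩
  · exact rpow_lt_rpow (by norm_num) (by norm_num) hγ
  · rw [mul_one, integral_rpow_sub_one hd (by linarith) hγ.ne']
    gcongr
  · rw [mul_one, integral_rpow_sub_one (by positivity) (by linarith) hγ.ne']
    gcongr
    exact sub_le_self _ (by positivity)

theorem radialProfileAsymp_log : RadialProfileAsymp 0 fun d ↦ log (1 / d) := by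
  refine ⟨1 / 2, 4, by norm_num, by norm_num, fun d ⟨hd, hd'⟩ ↦ ?_⟩
  have hlog : log d ≤ -(2 * log 2) := by
    have : log d ≤ log (2⁻¹ ^ 2) := log_le_log hd (by linarith)
    rw [log_pow, log_inv] at this
    push_cast at this
    linarith
  have hlower : log (1 / 2 / d) = -log 2 - log d := by
    rw [log_div (by norm_num) hd.ne', one_div, log_inv]
  have hupper : log (4 / (d / 2)) = 3 * log 2 - log d := by
    rw [show 4 / (d / 2) = 2 ^ 3 / d by ring, log_div (by norm_num) hd.ne', log_pow]
    norm_cast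
  simp only [zero_sub, rpow_neg_one]
  rw [integral_inv_of_pos hd (by norm_num), integral_inv_of_pos (by positivity) (by norm_num),
    hlower, hupper, one_div d, log_inv]
  constructor <;> linarith [log_pos one_lt_two]

theorem radialProfileAsymp_rpow {γ : ℝ} (hγ : γ < 0) : RadialProfileAsymp γ fun d ↦ d ^ γ := by
  have hγ' : 0 < -γ := neg_pos.2 hγ
  refine ⟨(1 - 2 ^ γ) / -γ, 2 ^ (-γ) / -γ, div_pos (sub_pos.2 ?_) hγ', by positivity,
    fun d ⟨hd, hd'⟩ ↦ ⟨?_, ?_⟩⟩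
  · exact rpow_lt_one_of_one_lt_of_neg one_lt_two hγ
  · have hhalf : (1 / 2 : ℝ) ^ γ ≤ 2 ^ γ * d ^ γ := by
      rw [← mul_rpow zero_le_two hd.le]
      exact rpow_le_rpow_of_nonpos (by positivity) (by linarith) hγ.le
    rw [integral_rpow_sub_one hd (by linarith) hγ.ne, ← neg_div_neg_eq (_ - d ^ γ), neg_sub,
      div_mul_eq_mul_div]
    exact div_le_div_of_nonneg_right (by linarith) hγ'.le
  · rw [integral_rpow_sub_one (by positivity) (by linarith) hγ.ne, ← neg_div_neg_eq,
      div_mul_eq_mul_div, div_rpow hd.le zero_le_two, rpow_neg zero_le_two]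
    gcongr
    rw [neg_sub, inv_mul_eq_div]
    exact sub_le_self _ (by positivity)

end RadialProfile

theorem ballGreenPotential_bounds [Nontrivial E] {s β : ℝ} (hs : 0 < s) (hβ : β < 1 + s) {g : ℝ → ℝ}
    (hg : RadialProfileAsymp (s - β) g) :
    ∃ c C : ℝ, 0 < c ∧ c ≤ C ∧ ∀ x ∈ ball (0 : E) 1, 1 - ‖x‖ < 1 / 4 →
      c * ((1 - ‖x‖) ^ s * g (1 - ‖x‖)) ≤ ballGreenPotential μ s β x ∧
      ballGreenPotential μ s β x ≤ C * ((1 - ‖x‖) ^ s * g (1 - ‖x‖)) := by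
  obtain ⟨c, C, hc, hC, hpotential⟩ := ballGreenPotential_integral_bounds μ hs hβ
  obtain ⟨c', C', hc', hC', hprofile⟩ := hg
  refine ⟨c * c', max (c * c') (C * C'), by positivity, le_max_left _ _, fun x hx hxε ↦ ?_⟩
  have hx₁ : ‖x‖ < 1 := mem_ball_zero_iff.1 hx
  have hd : 0 < 1 - ‖x‖ := sub_pos.2 hx₁
  obtain ⟨hlower, hupper⟩ := hpotential x ⟨by linarith, hx₁⟩
  obtain ⟨hlower', hupper'⟩ := hprofile _ ⟨hd, hxε⟩
  have hg₀ : 0 ≤ g (1 - ‖x‖) := nonneg_of_mul_nonneg_right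
    ((intervalIntegral.integral_nonneg (by linarith) fun r hr ↦
      rpow_nonneg ((half_pos hd).le.trans hr.1) _).trans hupper') hC'
  constructor
  · calc _ = c * ((1 - ‖x‖) ^ s * (c' * g (1 - ‖x‖))) := by ring
      _ ≤ _ := by gcongr
      _ ≤ _ := hlower
  · calc _ ≤ C * ((1 - ‖x‖) ^ s * (C' * g (1 - ‖x‖))) := hupper.trans (by gcongr)
      _ = C * C' * ((1 - ‖x‖) ^ s * g (1 - ‖x‖)) := by ring
      _ ≤ _ := by gcongr; exact le_max_right _ _

theorem greenPotential_boundary_behaviour_general [Nontrivial E] {s β : ℝ} (hs : 0 < s)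
    (hβ : β < 1 + s) :
    ∃ c C : ℝ, 0 < c ∧ c ≤ C ∧ ∃ ε₀ ∈ Ioo (0 : ℝ) 1,
      ∀ x ∈ ball (0 : E) 1, 1 - ‖x‖ < ε₀ →
        ((β < s →
          c * (1 - ‖x‖) ^ s ≤ ballGreenPotential μ s β x ∧
          ballGreenPotential μ s β x ≤ C * (1 - ‖x‖) ^ s) ∧
        (β = s →
          c * ((1 - ‖x‖) ^ s * log (1 / (1 - ‖x‖))) ≤ ballGreenPotential μ s β x ∧
          ballGreenPotential μ s β x ≤ C * ((1 - ‖x‖) ^ s * log (1 / (1 - ‖x‖)))) ∧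
        (s < β →
          c * (1 - ‖x‖) ^ (2 * s - β) ≤ ballGreenPotential μ s β x ∧
          ballGreenPotential μ s β x ≤ C * (1 - ‖x‖) ^ (2 * s - β))) := by
  have hε : (1 / 4 : ℝ) ∈ Ioo 0 1 := by norm_num
  rcases lt_trichotomy β s with h | rfl | h
  · obtain ⟨c, C, hc, hcC, hU⟩ :=
      ballGreenPotential_bounds μ hs hβ (radialProfileAsymp_one (sub_pos.2 h))
    refine ⟨c, C, hc, hcC, _, hε, fun x hx hxε ↦ ⟨fun _ ↦ ?_, fun h' ↦ absurd h' h.ne,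
      fun h' ↦ absurd h' h.not_gt⟩⟩
    simpa only [mul_one] using hU x hx hxε
  · obtain ⟨c, C, hc, hcC, hU⟩ :=
      ballGreenPotential_bounds μ hs hβ ((sub_self β).symm ▸ radialProfileAsymp_log)
    exact ⟨c, C, hc, hcC, _, hε, fun x hx hxε ↦ ⟨fun h' ↦ absurd h' (lt_irrefl β),
      fun _ ↦ hU x hx hxε, fun h' ↦ absurd h' (lt_irrefl β)⟩⟩
  · obtain ⟨c, C, hc, hcC, hU⟩ :=
      ballGreenPotential_bounds μ hs hβ (radialProfileAsymp_rpow (sub_neg.2 h))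
    refine ⟨c, C, hc, hcC, _, hε, fun x hx hxε ↦ ⟨fun h' ↦ absurd h' h.not_gt,
      fun h' ↦ absurd h' h.ne', fun _ ↦ ?_⟩⟩
    rw [show 2 * s - β = s + (s - β) by ring, rpow_add (sub_pos.2 (mem_ball_zero_iff.1 hx))]
    exact hU x hx hxε

theorem greenPotential_eq_ballGreenPotential (n : ℕ) (s β : ℝ) :
    greenPotential n s β = ballGreenPotential volume s β := by
  funext x
  simp only [greenPotential, ballGreenPotential, greenIntegrand, finrank_euclideanSpace_fin]

/-- Boundary behaviour of the Green potential of the right-hand side `δ^{−β}` on the unit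
ball: near the boundary `U ≍ δ^s` if `β < s`, `U ≍ δ^s log(1/δ)` if `β = s`, and
`U ≍ δ^{2s−β}` if `s < β < 1+s`. -/
theorem greenPotential_boundary_behaviour (n : ℕ) (hn : 2 ≤ n) (s β : ℝ)
    (hs : s ∈ Set.Ioo (0 : ℝ) 1) (hβ : 0 < β) (hβ' : β < 1 + s) :
    ∃ c C : ℝ, 0 < c ∧ c ≤ C ∧ ∃ ε₀ ∈ Set.Ioo (0 : ℝ) 1,
      ∀ x ∈ Metric.ball (0 : EuclideanSpace ℝ (Fin n)) 1, 1 - ‖x‖ < ε₀ →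
        ((β < s →
          c * (1 - ‖x‖) ^ s ≤ greenPotential n s β x ∧
          greenPotential n s β x ≤ C * (1 - ‖x‖) ^ s) ∧
        (β = s →
          c * ((1 - ‖x‖) ^ s * Real.log (1 / (1 - ‖x‖))) ≤ greenPotential n s β x ∧
          greenPotential n s β x ≤ C * ((1 - ‖x‖) ^ s * Real.log (1 / (1 - ‖x‖)))) ∧
        (s < β →
          c * (1 - ‖x‖) ^ (2 * s - β) ≤ greenPotential n s β x ∧
          greenPotential n s β x ≤ C * (1 - ‖x‖) ^ (2 * s - β))) := by
  have : Nonempty (Fin n) := ⟨⟨0, by lia⟩⟩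
  simpa only [greenPotential_eq_ballGreenPotential] using
    greenPotential_boundary_behaviour_general volume hs.1 hβ'
end

section
/- Let n ≥ 2. There exists a constant c = c(n) > 0 such that for every t ∈ (0,1), ∫_0^1 σ^{(n−3)/2}·((1−t)² + 2tσ)^{−n/2} dσ ≥ c/(1−t). -/
open MeasureTheory Real Set

/-!
Put `δ = (1 - t) ^ 2`, `a = (n - 3) / 2` and `q = -n / 2`. For `σ ≤ δ` we have
`δ + 2 * t * σ ≤ 3 * δ`, so on `(0, δ)` the integrand is at least `3 ^ q * δ ^ q * σ ^ a`.
Integrating `σ ^ a` over `(0, δ)` alone already gives a multiple of `δ ^ (a + q + 1)`, and the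
exponent `a + q + 1` equals `-1 / 2` for every `n`.
-/

theorem setIntegral_Ioo_zero_rpow {a r : ℝ} (ha : -1 < a) (hr : 0 ≤ r) :
    ∫ σ in Ioo 0 r, σ ^ a = r ^ (a + 1) / (a + 1) := by
  rw [← integral_Ioc_eq_integral_Ioo, ← intervalIntegral.integral_of_le hr,
    integral_rpow (Or.inl ha), zero_rpow (by linarith), sub_zero]

section Kernel

variable {a q b δ r : ℝ}

theorem integrableOn_Ioo_rpow_mul_add_mul_rpow (ha : -1 < a) (hb : 0 ≤ b) (hδ : 0 < δ) :
    IntegrableOn (fun σ ↦ σ ^ a * (δ + b * σ) ^ q) (Ioo 0 r) := by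
  have h_pow : IntegrableOn (fun σ : ℝ ↦ σ ^ a) (Ioo 0 r) :=
    (intervalIntegral.intervalIntegrable_rpow' ha).1.mono_set Ioo_subset_Ioc_self
  have h_cont : ContinuousOn (fun σ : ℝ ↦ (δ + b * σ) ^ q) (Icc 0 r) :=
    ContinuousOn.rpow_const (by fun_prop) fun σ hσ ↦
      Or.inl (add_pos_of_pos_of_nonneg hδ (mul_nonneg hb hσ.1)).ne'
  exact h_pow.mul_continuousOn_of_subset h_cont measurableSet_Ioo isCompact_Icc Ioo_subset_Icc_self

theorem mul_rpow_le_add_mul_rpow {σ : ℝ} (hq : q ≤ 0) (hb : 0 ≤ b) (hδ : 0 < δ)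
    (hσ : σ ∈ Icc 0 δ) :
    (1 + b) ^ q * δ ^ q ≤ (δ + b * σ) ^ q := by
  obtain ⟨hσ_nonneg, hσ_le⟩ := hσ
  rw [← mul_rpow (by positivity) hδ.le]
  refine rpow_le_rpow_of_nonpos (by positivity) ?_ hq
  calc δ + b * σ ≤ δ + b * δ := by gcongr
    _ = (1 + b) * δ := by ring

theorem le_setIntegral_Ioo_rpow_mul_add_mul_rpow (ha : -1 < a) (hq : q ≤ 0) (hb : 0 ≤ b)
    (hδ : 0 < δ) (hδr : δ ≤ r) :
    (1 + b) ^ q / (a + 1) * δ ^ (a + q + 1) ≤ ∫ σ in Ioo 0 r, σ ^ a * (δ + b * σ) ^ q := by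
  have h_int {x : ℝ} : IntegrableOn (fun σ ↦ σ ^ a * (δ + b * σ) ^ q) (Ioo 0 x) :=
    integrableOn_Ioo_rpow_mul_add_mul_rpow ha hb hδ
  have h_pow_int : IntegrableOn (fun σ : ℝ ↦ σ ^ a) (Ioo 0 δ) :=
    (intervalIntegral.integrableOn_Ioo_rpow_iff hδ).2 ha
  calc (1 + b) ^ q / (a + 1) * δ ^ (a + q + 1)
      = δ ^ (a + 1) / (a + 1) * ((1 + b) ^ q * δ ^ q) := by
        rw [add_right_comm, rpow_add hδ]
        ring
    _ = ∫ σ in Ioo 0 δ, σ ^ a * ((1 + b) ^ q * δ ^ q) := by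
        rw [integral_mul_const, setIntegral_Ioo_zero_rpow ha hδ.le]
    _ ≤ ∫ σ in Ioo 0 δ, σ ^ a * (δ + b * σ) ^ q :=
        setIntegral_mono_on (h_pow_int.mul_const _) h_int measurableSet_Ioo fun σ hσ ↦
          mul_le_mul_of_nonneg_left (mul_rpow_le_add_mul_rpow hq hb hδ (Ioo_subset_Icc_self hσ))
            (rpow_nonneg hσ.1.le a)
    _ ≤ ∫ σ in Ioo 0 r, σ ^ a * (δ + b * σ) ^ q := by
        refine setIntegral_mono_set h_int ?_ (Ioo_subset_Ioo_right hδr).eventuallyLE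
        filter_upwards [ae_restrict_mem measurableSet_Ioo] with σ hσ
        have hσ_pos : 0 < σ := hσ.1
        dsimp only [Pi.zero_apply]
        positivity

end Kernel

theorem integral_lower_bound_kernel_general {p t : ℝ} (hp : 1 < p) (ht : t ∈ Ico (0 : ℝ) 1) :
    2 * 3 ^ (-p / 2) / (p - 1) / (1 - t) ≤
      ∫ σ in Ioo (0 : ℝ) 1, σ ^ ((p - 3) / 2) * ((1 - t) ^ 2 + 2 * t * σ) ^ (-p / 2) := by
  obtain ⟨ht_nonneg, ht_lt⟩ := ht
  have hs : 0 < 1 - t := sub_pos.2 ht_lt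
  have hp' : 0 < p - 1 := sub_pos.2 hp
  have hq : -p / 2 ≤ 0 := by linarith
  have h_scale : ((1 - t) ^ 2) ^ ((p - 3) / 2 + -p / 2 + 1) = (1 - t)⁻¹ := by
    rw [show (p - 3) / 2 + -p / 2 + 1 = -(1 / 2) by ring, rpow_neg (sq_nonneg _),
      ← sqrt_eq_rpow, sqrt_sq hs.le]
  calc 2 * 3 ^ (-p / 2) / (p - 1) / (1 - t)
      = 3 ^ (-p / 2) / ((p - 3) / 2 + 1) * ((1 - t) ^ 2) ^ ((p - 3) / 2 + -p / 2 + 1) := by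
        rw [h_scale, show (p - 3) / 2 + 1 = (p - 1) / 2 by ring]
        field_simp
    _ ≤ (1 + 2 * t) ^ (-p / 2) / ((p - 3) / 2 + 1) *
          ((1 - t) ^ 2) ^ ((p - 3) / 2 + -p / 2 + 1) := by
        have h_base : (3 : ℝ) ^ (-p / 2) ≤ (1 + 2 * t) ^ (-p / 2) :=
          rpow_le_rpow_of_nonpos (by positivity) (by linarith) hq
        have h_denom : 0 ≤ (p - 3) / 2 + 1 := by linarith
        gcongr
    _ ≤ ∫ σ in Ioo (0 : ℝ) 1, σ ^ ((p - 3) / 2) * ((1 - t) ^ 2 + 2 * t * σ) ^ (-p / 2) :=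
        le_setIntegral_Ioo_rpow_mul_add_mul_rpow (by linarith) hq (by positivity) (by positivity)
          (pow_le_one₀ hs.le (by linarith))

/-- For `n ≥ 2` there is `c = c(n) > 0` such that for every `t ∈ (0,1)`,
`∫_0^1 σ^{(n−3)/2}·((1−t)² + 2tσ)^{−n/2} dσ ≥ c/(1−t)`. -/
theorem integral_lower_bound_kernel (n : ℕ) (hn : 2 ≤ n) :
    ∃ c : ℝ, 0 < c ∧ ∀ t ∈ Set.Ioo (0 : ℝ) 1,
      c / (1 - t) ≤
        ∫ σ in Set.Ioo (0 : ℝ) 1,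
          σ ^ (((n : ℝ) - 3) / 2) * ((1 - t) ^ 2 + 2 * t * σ) ^ (-(n : ℝ) / 2) := by
  have hn' : (1 : ℝ) < n := by exact_mod_cast hn
  exact ⟨2 * 3 ^ (-(n : ℝ) / 2) / (n - 1), div_pos (by positivity) (sub_pos.2 hn'),
    fun t ht ↦ integral_lower_bound_kernel_general hn' (Ioo_subset_Ico_self ht)⟩
end
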